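/- arXiv:2502.11162 — 2 statements merged into one kernel-verified Lean document; each statement's English description precedes it below -/
import Mathlib

section
/- Let N, d, C be natural numbers at least 2, let k be a natural number with d + 6 ≤ k, let p ∈ (0, ∞], and let σ, δ > 0 satisfy σ/δ < 1/(2·c_p^+(d)) where c_p^+(d) = d^{[1/2 − 1/p]_+} (with 1/∞ = 0). Then there is a universal constant C₀ such that for every δ-separated dataset D of size N with C classes in ℝ^d, there exists a feedforward ReLU neural network f : ℝ^d → ℝ of width k and depth at most C₀ · N · d · log₂(d / (1 − 2·c_p^+(d)·σ/δ)) that (σ, p)-robustly memorizes D. -/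
open scoped ENNReal BigOperators

noncomputable section

/-- A multilayer perceptron (feedforward ReLU network) with input dimension `m`
and output dimension `n`, given as a nonempty list of affine layers. -/
inductive MLP : ℕ → ℕ → Type
  | last : {m n : ℕ} → Matrix (Fin n) (Fin m) ℝ → (Fin n → ℝ) → MLP m n
  | cons : {m h n : ℕ} → Matrix (Fin h) (Fin m) ℝ → (Fin h → ℝ) → MLP h n → MLP m n

/-- Evaluation of an MLP: every affine layer except the last is followed by a
coordinatewise ReLU. -/
def MLP.eval : {m n : ℕ} → MLP m n → (Fin m → ℝ) → Fin n → ℝ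
  | _, _, .last W b, x => W.mulVec x + b
  | _, _, .cons W b rest, x => MLP.eval rest fun i => max ((W.mulVec x + b) i) 0

/-- Depth of an MLP: the number of affine layers. -/
def MLP.depth : {m n : ℕ} → MLP m n → ℕ
  | _, _, .last _ _ => 1
  | _, _, .cons _ _ rest => MLP.depth rest + 1

/-- Width of an MLP: the maximum of the hidden-layer dimensions. -/
def MLP.width : {m n : ℕ} → MLP m n → ℕ
  | _, _, .last _ _ => 0
  | _, _, @MLP.cons _ h _ _ _ rest => max h (MLP.width rest)

/-- The `l_p` (quasi-)norm on `ℝ^d`, for `p ∈ (0,∞]`. -/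
def lpNorm (p : ℝ≥0∞) {d : ℕ} (x : Fin d → ℝ) : ℝ :=
  if p = ⊤ then ⨆ i, |x i| else (∑ i, |x i| ^ p.toReal) ^ (1 / p.toReal)

/-- The `l_p` norm on `ℝ^d` with a real exponent `p`. -/
def lpNormR (p : ℝ) {d : ℕ} (x : Fin d → ℝ) : ℝ := (∑ i, |x i| ^ p) ^ (1 / p)

/-- `1/p`, with the convention `1/∞ = 0`. -/
def rinv (p : ℝ≥0∞) : ℝ := if p = ⊤ then 0 else 1 / p.toReal

/-- `c_p^+(d) = d^{[1/2 - 1/p]_+}`. -/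
def cplus (p : ℝ≥0∞) (d : ℕ) : ℝ := (d : ℝ) ^ max ((1 : ℝ) / 2 - rinv p) 0

/-- `c_p^-(d) = d^{[1/2 - 1/p]_-}`. -/
def cminus (p : ℝ≥0∞) (d : ℕ) : ℝ := (d : ℝ) ^ min ((1 : ℝ) / 2 - rinv p) 0

/-- A dataset is `(δ, q)`-separated if the minimal `l_q` distance between
differently labeled points equals `δ`. -/
def Separated {N d : ℕ} (q : ℝ≥0∞) (δ : ℝ) (X : Fin N → Fin d → ℝ) (Y : Fin N → ℕ) : Prop :=
  (∀ i j, Y i ≠ Y j → δ ≤ lpNorm q (X i - X j)) ∧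
    ∃ i j, Y i ≠ Y j ∧ lpNorm q (X i - X j) = δ

/-- `f` `(σ, p)`-robustly memorizes the dataset `(X, Y)`. -/
def RobustMem {N d : ℕ} (p : ℝ≥0∞) (σ : ℝ) (X : Fin N → Fin d → ℝ) (Y : Fin N → ℕ)
    (f : (Fin d → ℝ) → ℝ) : Prop :=
  ∀ i, ∀ x : Fin d → ℝ, lpNorm p (x - X i) ≤ σ → f x = (Y i : ℝ)

/-- A matrix `M` `(σ, k)`-preserves a dataset: Euclidean distances between points of
`σ`-neighborhoods (in `l₂`) of differently labeled data points do not decrease. -/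
def Preserves {N d m : ℕ} (σ : ℝ) (X : Fin N → Fin d → ℝ) (Y : Fin N → ℕ)
    (M : Matrix (Fin m) (Fin d) ℝ) : Prop :=
  ∀ i j, Y i ≠ Y j → ∀ a a' : Fin d → ℝ,
    lpNorm 2 (a - X i) ≤ σ → lpNorm 2 (a' - X j) ≤ σ →
      lpNorm 2 (a - a') ≤ lpNorm 2 (M.mulVec a - M.mulVec a')

/-- The `l₂ → l₂` (spectral) operator norm of a matrix. -/
def matOpNorm {m d : ℕ} (M : Matrix (Fin m) (Fin d) ℝ) : ℝ :=
  sSup {c | ∃ x : Fin d → ℝ, lpNorm 2 x ≤ 1 ∧ c = lpNorm 2 (M.mulVec x)}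

/-- Generalized binomial coefficient `C(s, m) = s(s-1)⋯(s-m+1)/m!`. -/
def gchoose (s : ℝ) (m : ℕ) : ℝ := (∏ i ∈ Finset.range m, (s - (i : ℝ))) / (m.factorial : ℝ)

/-!
Everything takes place in the Euclidean norm, since an `ℓ_p` ball of radius `σ` lies in the
Euclidean ball of radius `ρ δ` with `ρ = c_p^+(d) σ / δ < 1 / 2`. After rescaling by `δ⁻¹`, points
of such a ball have distance at most `ρ` from its centre and at least `1 - ρ` from data points with
other labels. Clipping coordinate differences to `[-1, 1]` and squaring them with Yarotsky's
iterated tent maps gives the squared distance up to `d / 4 ^ (m + 1)`, which is less than the gap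
`(1 - ρ) ^ 2 - ρ ^ 2 = 1 - 2 ρ` as soon as `m ≥ log₂ (d / (1 - 2 ρ))`. A ramp in this quantity is
then a bump function, exactly `1` near the data point and `0` near differently labelled ones, and
the maximum of the bumps multiplied by their labels memorizes the dataset. A network of width
`d + 4` evaluates this maximum sequentially, one coordinate of one data point at a time, holding
the input, the running maximum and three working numbers in its neurons.
-/

/-! ### Comparison of `ℓ_p` norms -/

section LpNorm

variable {ι : Type*} {s : Finset ι} {f : ι → ℝ} {q r : ℝ}

theorem sum_rpow_le_rpow_sum (hf : ∀ i ∈ s, 0 ≤ f i) (hr : 1 ≤ r) :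
    ∑ i ∈ s, f i ^ r ≤ (∑ i ∈ s, f i) ^ r := by
  classical
  induction s using Finset.induction_on with
  | empty => simp [Real.zero_rpow (by linarith : r ≠ 0)]
  | insert a s ha ih =>
    rw [Finset.forall_mem_insert] at hf
    rw [Finset.sum_insert ha, Finset.sum_insert ha]
    exact (add_le_add_right (ih hf.2) _).trans
      (Real.add_rpow_le_rpow_add hf.1 (Finset.sum_nonneg hf.2) hr)

theorem rpow_sum_rpow_le_of_exponent_le (hf : ∀ i ∈ s, 0 ≤ f i) (hq : 0 < q) (hqr : q ≤ r) :
    (∑ i ∈ s, f i ^ r) ^ (1 / r) ≤ (∑ i ∈ s, f i ^ q) ^ (1 / q) := by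
  have hr : 0 < r := hq.trans_le hqr
  have hsum : 0 ≤ ∑ i ∈ s, f i ^ q := Finset.sum_nonneg fun i hi ↦ Real.rpow_nonneg (hf i hi) q
  calc (∑ i ∈ s, f i ^ r) ^ (1 / r)
      = (∑ i ∈ s, (f i ^ q) ^ (r / q)) ^ (1 / r) := by
        congr 1
        refine Finset.sum_congr rfl fun i hi ↦ ?_
        rw [← Real.rpow_mul (hf i hi), mul_div_cancel₀ r hq.ne']
    _ ≤ ((∑ i ∈ s, f i ^ q) ^ (r / q)) ^ (1 / r) := by
        refine Real.rpow_le_rpow (Finset.sum_nonneg fun i hi ↦ ?_)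
          (sum_rpow_le_rpow_sum (fun i hi ↦ Real.rpow_nonneg (hf i hi) q)
            ((one_le_div₀ hq).2 hqr)) (by positivity)
        exact Real.rpow_nonneg (Real.rpow_nonneg (hf i hi) q) _
    _ = (∑ i ∈ s, f i ^ q) ^ (1 / q) := by
        rw [← Real.rpow_mul hsum]
        congr 1
        field_simp

theorem rpow_sum_rpow_le_card_rpow_mul (hf : ∀ i ∈ s, 0 ≤ f i) (hq : 0 < q) (hqr : q ≤ r) :
    (∑ i ∈ s, f i ^ q) ^ (1 / q) ≤
      (s.card : ℝ) ^ (1 / q - 1 / r) * (∑ i ∈ s, f i ^ r) ^ (1 / r) := by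
  have hr : 0 < r := hq.trans_le hqr
  have hsum : ∀ t : ℝ, 0 ≤ ∑ i ∈ s, f i ^ t :=
    fun t ↦ Finset.sum_nonneg fun i hi ↦ Real.rpow_nonneg (hf i hi) t
  have hmean : (∑ i ∈ s, f i ^ q) ^ (r / q) ≤ (s.card : ℝ) ^ (r / q - 1) * ∑ i ∈ s, f i ^ r := by
    refine (Real.rpow_sum_le_const_mul_sum_rpow_of_nonneg s ((one_le_div₀ hq).2 hqr)
      fun i hi ↦ Real.rpow_nonneg (hf i hi) q).trans_eq ?_
    congr 1
    refine Finset.sum_congr rfl fun i hi ↦ ?_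
    rw [← Real.rpow_mul (hf i hi), mul_div_cancel₀ r hq.ne']
  calc (∑ i ∈ s, f i ^ q) ^ (1 / q)
      = ((∑ i ∈ s, f i ^ q) ^ (r / q)) ^ (1 / r) := by
        rw [← Real.rpow_mul (hsum q)]
        congr 1
        field_simp
    _ ≤ ((s.card : ℝ) ^ (r / q - 1) * ∑ i ∈ s, f i ^ r) ^ (1 / r) :=
        Real.rpow_le_rpow (Real.rpow_nonneg (hsum q) _) hmean (by positivity)
    _ = (s.card : ℝ) ^ (1 / q - 1 / r) * (∑ i ∈ s, f i ^ r) ^ (1 / r) := by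
        rw [Real.mul_rpow (by positivity) (hsum r), ← Real.rpow_mul (by positivity)]
        congr 2
        field_simp

variable {d : ℕ}

theorem lpNorm_two_eq_norm (x : Fin d → ℝ) : lpNorm 2 x = ‖WithLp.toLp 2 x‖ := by
  simp [lpNorm, EuclideanSpace.norm_eq, Real.sqrt_eq_rpow]

theorem sum_sq_eq_lpNorm_two_sq (x : Fin d → ℝ) : ∑ t, x t ^ 2 = lpNorm 2 x ^ 2 := by
  simp [lpNorm_two_eq_norm, EuclideanSpace.norm_sq_eq]

theorem lpNorm_two_smul (c : ℝ) (x : Fin d → ℝ) : lpNorm 2 (c • x) = |c| * lpNorm 2 x := by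
  simp [lpNorm_two_eq_norm, norm_smul]

theorem lpNorm_two_nonneg (x : Fin d → ℝ) : 0 ≤ lpNorm 2 x := by
  rw [lpNorm_two_eq_norm]
  exact norm_nonneg _

theorem abs_apply_le_lpNorm_two (x : Fin d → ℝ) (t : Fin d) : |x t| ≤ lpNorm 2 x := by
  rw [lpNorm_two_eq_norm]
  exact PiLp.norm_apply_le (WithLp.toLp 2 x) t

theorem lpNorm_two_sub_le (x y z : Fin d → ℝ) :
    lpNorm 2 (x - z) ≤ lpNorm 2 (y - x) + lpNorm 2 (y - z) := by
  simp only [lpNorm_two_eq_norm, WithLp.toLp_sub]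
  rw [norm_sub_rev (WithLp.toLp 2 y)]
  exact norm_sub_le_norm_sub_add_norm_sub _ _ _

theorem lpNorm_two_le_sqrt_mul_lpNorm_top (x : Fin d → ℝ) :
    lpNorm 2 x ≤ √d * lpNorm ⊤ x := by
  have hcoord : ∀ t, |x t| ≤ lpNorm ⊤ x := fun t ↦ by
    rw [lpNorm, if_pos rfl]
    exact le_ciSup (f := fun t ↦ |x t|) (Set.finite_range _).bddAbove t
  have htop : 0 ≤ lpNorm ⊤ x := by
    rw [lpNorm, if_pos rfl]
    exact Real.iSup_nonneg fun t ↦ abs_nonneg (x t)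
  refine (sq_le_sq₀ (lpNorm_two_nonneg x) (by positivity)).1 ?_
  calc lpNorm 2 x ^ 2 = ∑ t, |x t| ^ 2 := by simp only [← sum_sq_eq_lpNorm_two_sq, sq_abs]
    _ ≤ ∑ _t : Fin d, lpNorm ⊤ x ^ 2 := by gcongr; exact hcoord _
    _ = (√d * lpNorm ⊤ x) ^ 2 := by simp [mul_pow]

theorem lpNorm_two_le_cplus_mul_lpNorm {p : ℝ≥0∞} (hp : 0 < p) (x : Fin d → ℝ) :
    lpNorm 2 x ≤ cplus p d * lpNorm p x := by
  rcases eq_or_ne p ⊤ with rfl | hp_top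
  · simpa [cplus, rinv, Real.sqrt_eq_rpow] using lpNorm_two_le_sqrt_mul_lpNorm_top x
  have hq : 0 < p.toReal := ENNReal.toReal_pos hp.ne' hp_top
  have habs : ∀ t ∈ Finset.univ, 0 ≤ |x t| := fun t _ ↦ abs_nonneg (x t)
  rw [cplus, rinv, if_neg hp_top, lpNorm, lpNorm, if_neg hp_top, if_neg ENNReal.ofNat_ne_top,
    ENNReal.toReal_ofNat]
  rcases le_total p.toReal 2 with hq2 | hq2
  · rw [max_eq_right (sub_nonpos.2 (one_div_le_one_div_of_le hq hq2)), Real.rpow_zero, one_mul]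
    exact rpow_sum_rpow_le_of_exponent_le habs hq hq2
  · rw [max_eq_left (sub_nonneg.2 (one_div_le_one_div_of_le two_pos hq2))]
    simpa using rpow_sum_rpow_le_card_rpow_mul habs two_pos hq2

theorem cplus_pos (p : ℝ≥0∞) (hd : 0 < d) : 0 < cplus p d :=
  Real.rpow_pos_of_pos (Nat.cast_pos.2 hd) _

theorem RobustMem.of_two {N : ℕ} {p : ℝ≥0∞} (hp : 0 < p) {σ : ℝ} {X : Fin N → Fin d → ℝ}
    {Y : Fin N → ℕ} {g : (Fin d → ℝ) → ℝ} (h : RobustMem 2 (cplus p d * σ) X Y g) :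
    RobustMem p σ X Y g := fun i x hx ↦
  h i x <| (lpNorm_two_le_cplus_mul_lpNorm hp _).trans <|
    mul_le_mul_of_nonneg_left hx (Real.rpow_nonneg d.cast_nonneg _)

end LpNorm

/-! ### Networks as sequences of affine maps -/

section Layers

variable {m h n : ℕ}

/-- The pre-activation of a layer with `m` inputs and `h` neurons. -/
abbrev AffineLayer (m h : ℕ) : Type := (Fin m → ℝ) →ᵃ[ℝ] (Fin h → ℝ)

/-- A hidden layer of a ReLU network: an affine map followed by the coordinatewise ReLU. -/
def reluLayer (A : AffineLayer m h) (s : Fin m → ℝ) : Fin h → ℝ :=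
  fun i ↦ max (A s i) 0

/-- The effect on a state vector of hidden layers of constant width; the head of the list acts
first. -/
def runLayers (l : List (AffineLayer h h)) (s : Fin h → ℝ) : Fin h → ℝ :=
  l.foldl (fun s A ↦ reluLayer A s) s

@[simp]
theorem runLayers_nil (s : Fin h → ℝ) : runLayers [] s = s := rfl

@[simp]
theorem runLayers_cons (A : AffineLayer h h) (l) (s : Fin h → ℝ) :
    runLayers (A :: l) s = runLayers l (reluLayer A s) := rfl

@[simp]
theorem runLayers_append (l l' : List (AffineLayer h h)) (s : Fin h → ℝ) :
    runLayers (l ++ l') s = runLayers l' (runLayers l s) :=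
  List.foldl_append

namespace MLP

/-- The network with a hidden layer, given by an affine map, put in front of `net`. -/
def consAffine (A : AffineLayer m h) (net : MLP h n) : MLP m n :=
  cons (LinearMap.toMatrix' A.linear) (A 0) net

theorem eval_consAffine (A : AffineLayer m h) (net : MLP h n) (x : Fin m → ℝ) :
    (consAffine A net).eval x = net.eval (reluLayer A x) := by
  have hA : (LinearMap.toMatrix' A.linear).mulVec x + A 0 = A x := by
    rw [LinearMap.toMatrix'_mulVec]
    exact (congrFun A.decomp x).symm
  rw [consAffine, eval, hA]
  rfl

/-- The network with hidden layers of constant width put in front of `net`. -/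
def prependLayers (l : List (AffineLayer h h)) (net : MLP h n) : MLP h n :=
  l.foldr consAffine net

theorem eval_prependLayers (l : List (AffineLayer h h)) (net : MLP h n)
    (s : Fin h → ℝ) : (prependLayers l net).eval s = net.eval (runLayers l s) := by
  induction l generalizing s with
  | nil => rfl
  | cons A l ih => exact (eval_consAffine A _ s).trans (ih _)

theorem depth_prependLayers (l : List (AffineLayer h h)) (net : MLP h n) :
    (prependLayers l net).depth = l.length + net.depth := by
  induction l with
  | nil => simp [prependLayers]
  | cons A l ih =>
    rw [List.length_cons, add_right_comm, ← ih]
    rfl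

theorem width_prependLayers (l : List (AffineLayer h h)) {net : MLP h n}
    (hnet : h ≤ net.width) : (prependLayers l net).width = net.width := by
  induction l with
  | nil => rfl
  | cons _ l ih => exact (congrArg (max h) ih).trans (max_eq_right hnet)

end MLP

end Layers

/-! ### The register machine -/

section Registers

variable {α : Type*} {d : ℕ}

/-- Layout of a hidden layer of width `d + 4`: a copy of the input, the output register, the
accumulator and two scratch registers. Used both for the values in the registers and for the
affine functionals that update them. -/
def registers (x : Fin d → α) (o a u v : α) : Fin (d + 4) → α :=
  Fin.append x ![o, a, u, v]

theorem comp_registers {β : Type*} (φ : α → β) (x : Fin d → α) (o a u v : α) :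
    (fun i ↦ φ (registers x o a u v i)) =
      registers (fun t ↦ φ (x t)) (φ o) (φ a) (φ u) (φ v) := by
  funext i
  refine Fin.addCases (fun t ↦ ?_) (fun j ↦ ?_) i
  · simp [registers]
  · fin_cases j <;> simp [registers]

/-- The affine functional reading off input register `t`. -/
def regIn (t : Fin d) : (Fin (d + 4) → ℝ) →ᵃ[ℝ] ℝ := AffineMap.proj (Fin.castAdd 4 t)

/-- The affine functional reading off the output register. -/
def regOut : (Fin (d + 4) → ℝ) →ᵃ[ℝ] ℝ := AffineMap.proj (Fin.natAdd d 0)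

/-- The affine functional reading off the accumulator. -/
def regAcc : (Fin (d + 4) → ℝ) →ᵃ[ℝ] ℝ := AffineMap.proj (Fin.natAdd d 1)

/-- The affine functional reading off the first scratch register. -/
def regU : (Fin (d + 4) → ℝ) →ᵃ[ℝ] ℝ := AffineMap.proj (Fin.natAdd d 2)

/-- The affine functional reading off the second scratch register. -/
def regV : (Fin (d + 4) → ℝ) →ᵃ[ℝ] ℝ := AffineMap.proj (Fin.natAdd d 3)

section Read

variable (x : Fin d → ℝ) (o a u v : ℝ)

@[simp]
theorem regIn_registers (t : Fin d) : regIn t (registers x o a u v) = x t := by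
  simp [regIn, registers]

@[simp]
theorem regOut_registers : regOut (registers x o a u v) = o := by
  simp [regOut, registers]

@[simp]
theorem regAcc_registers : regAcc (registers x o a u v) = a := by
  simp [regAcc, registers]

@[simp]
theorem regU_registers : regU (registers x o a u v) = u := by
  simp [regU, registers]

@[simp]
theorem regV_registers : regV (registers x o a u v) = v := by
  simp [regV, registers]

end Read

/-- The affine map that updates the four working registers by the given functionals and keeps the
input registers. -/
def updateRegs (o a u v : (Fin (d + 4) → ℝ) →ᵃ[ℝ] ℝ) :
    AffineLayer (d + 4) (d + 4) :=
  AffineMap.pi (registers regIn o a u v)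

theorem reluLayer_pi_registers {n : ℕ} (F : Fin d → (Fin n → ℝ) →ᵃ[ℝ] ℝ)
    (o a u v : (Fin n → ℝ) →ᵃ[ℝ] ℝ) (s : Fin n → ℝ) :
    reluLayer (AffineMap.pi (registers F o a u v)) s =
      registers (fun t ↦ max (F t s) 0) (max (o s) 0) (max (a s) 0) (max (u s) 0) (max (v s) 0) :=
  comp_registers (fun A : (Fin n → ℝ) →ᵃ[ℝ] ℝ ↦ max (A s) 0) F o a u v

theorem reluLayer_updateRegs {x : Fin d → ℝ} (hx : 0 ≤ x) (o a u v : ℝ)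
    (o' a' u' v' : (Fin (d + 4) → ℝ) →ᵃ[ℝ] ℝ) :
    reluLayer (updateRegs o' a' u' v') (registers x o a u v) =
      registers x (max (o' (registers x o a u v)) 0) (max (a' (registers x o a u v)) 0)
        (max (u' (registers x o a u v)) 0) (max (v' (registers x o a u v)) 0) := by
  rw [updateRegs, reluLayer_pi_registers]
  congr 1
  funext t
  rw [regIn_registers]
  exact max_eq_left (hx t)

/-! ### Approximating squares by iterated tent maps -/

/-- The tent map on `[0, 1]`, in the form in which ReLU units compute it. -/
def tent (u : ℝ) : ℝ := 2 * u - 4 * max (u - 1 / 2) 0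

theorem tent_mem_Icc {u : ℝ} (hu : u ∈ Set.Icc 0 1) : tent u ∈ Set.Icc 0 1 := by
  obtain ⟨h₀, h₁⟩ := hu
  rcases le_total (u - 1 / 2) 0 with h | h
  · rw [tent, max_eq_right h]
    constructor <;> linarith
  · rw [tent, max_eq_left h]
    constructor <;> linarith

theorem tent_add_tent_mul_one_sub (u : ℝ) :
    tent u + tent u * (1 - tent u) = 4 * (u * (1 - u)) := by
  rcases le_total (u - 1 / 2) 0 with h | h
  · rw [tent, max_eq_right h]
    ring
  · rw [tent, max_eq_left h]
    ring

theorem tent_iterate_mem_Icc {u : ℝ} (hu : u ∈ Set.Icc 0 1) (m : ℕ) :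
    tent^[m] u ∈ Set.Icc 0 1 := by
  have hmaps : Set.MapsTo tent (Set.Icc 0 1) (Set.Icc 0 1) := fun _ ↦ tent_mem_Icc
  exact hmaps.iterate m hu

/-- Yarotsky's approximation `u - ∑ j ∈ {1, …, m}, tent^[j] u / 4 ^ j` of `u ^ 2`, written with its
error term. -/
def approxSq (m : ℕ) (u : ℝ) : ℝ := u ^ 2 + tent^[m] u * (1 - tent^[m] u) / 4 ^ m

theorem approxSq_zero (u : ℝ) : approxSq 0 u = u := by
  simp only [approxSq, Function.iterate_zero, id_eq, pow_zero]
  ring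

theorem approxSq_succ (m : ℕ) (u : ℝ) :
    approxSq (m + 1) u = approxSq m u - (4 ^ (m + 1))⁻¹ * tent (tent^[m] u) := by
  have h := tent_add_tent_mul_one_sub (tent^[m] u)
  rw [approxSq, approxSq, Function.iterate_succ_apply']
  linear_combination (4 ^ (m + 1))⁻¹ * h

theorem sq_le_approxSq (m : ℕ) {u : ℝ} (hu : u ∈ Set.Icc 0 1) : u ^ 2 ≤ approxSq m u := by
  obtain ⟨h₀, h₁⟩ := tent_iterate_mem_Icc hu m
  have : 0 ≤ tent^[m] u * (1 - tent^[m] u) := mul_nonneg h₀ (sub_nonneg.2 h₁)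
  rw [approxSq, le_add_iff_nonneg_right]
  positivity

theorem approxSq_le (m : ℕ) (u : ℝ) : approxSq m u ≤ u ^ 2 + 1 / 4 ^ (m + 1) := by
  have h : tent^[m] u * (1 - tent^[m] u) ≤ 1 / 4 := by nlinarith [sq_nonneg (tent^[m] u - 1 / 2)]
  calc approxSq m u ≤ u ^ 2 + 1 / 4 / 4 ^ m := by unfold approxSq; gcongr
    _ = u ^ 2 + 1 / 4 ^ (m + 1) := by rw [div_div, ← pow_succ']

/-! ### Bump functions -/

/-- The piecewise linear function clamping to `[0, 1]`, in the form in which ReLU units compute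
it. -/
def ramp (z : ℝ) : ℝ := max z 0 - max (z - 1) 0

theorem ramp_of_nonneg {z : ℝ} (hz : 0 ≤ z) : ramp z = min z 1 := by
  rw [ramp, max_eq_left hz]
  rcases le_total z 1 with h | h
  · rw [max_eq_right (sub_nonpos.2 h), min_eq_left h, sub_zero]
  · rw [max_eq_left (sub_nonneg.2 h), min_eq_right h, sub_sub_cancel]

theorem ramp_of_nonpos {z : ℝ} (hz : z ≤ 0) : ramp z = 0 := by
  rw [ramp, max_eq_right hz, max_eq_right (by linarith), sub_zero]

theorem ramp_of_one_le {z : ℝ} (hz : 1 ≤ z) : ramp z = 1 := by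
  rw [ramp_of_nonneg (by linarith), min_eq_right hz]

theorem ramp_mem_Icc (z : ℝ) : ramp z ∈ Set.Icc 0 1 := by
  rcases le_total z 0 with h | h
  · simp [ramp_of_nonpos h]
  · simp [ramp_of_nonneg h, h]

section Bump

variable {d : ℕ}

theorem sum_ramp_abs_sq_le (w : Fin d → ℝ) : ∑ t, ramp |w t| ^ 2 ≤ lpNorm 2 w ^ 2 := by
  rw [← sum_sq_eq_lpNorm_two_sq]
  refine Finset.sum_le_sum fun t _ ↦ ?_
  rw [← sq_abs (w t), ramp_of_nonneg (abs_nonneg _)]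
  gcongr
  exact min_le_left _ _

theorem sq_le_sum_ramp_abs_sq {w : Fin d → ℝ} {b : ℝ} (hb : b ∈ Set.Icc 0 1)
    (hbw : b ≤ lpNorm 2 w) : b ^ 2 ≤ ∑ t, ramp |w t| ^ 2 := by
  by_cases hlarge : ∃ t, 1 ≤ |w t|
  · obtain ⟨t, ht⟩ := hlarge
    calc b ^ 2 ≤ 1 := pow_le_one₀ hb.1 hb.2
      _ = ramp |w t| ^ 2 := by rw [ramp_of_one_le ht, one_pow]
      _ ≤ ∑ t, ramp |w t| ^ 2 :=
        Finset.single_le_sum (f := fun t ↦ ramp |w t| ^ 2) (fun t _ ↦ sq_nonneg _)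
          (Finset.mem_univ t)
  · push Not at hlarge
    calc b ^ 2 ≤ lpNorm 2 w ^ 2 := pow_le_pow_left₀ hb.1 hbw 2
      _ = ∑ t, ramp |w t| ^ 2 := by
        rw [← sum_sq_eq_lpNorm_two_sq]
        refine Finset.sum_congr rfl fun t _ ↦ ?_
        rw [ramp_of_nonneg (abs_nonneg _), min_eq_left (hlarge t).le, sq_abs]

/-- A function of the displacement `w` from a data point that drops from `1` to `0` as the
approximate squared length of `w`, with coordinates clipped to `[-1, 1]`, grows from `lo` to
`hi`. -/
def bump (m : ℕ) (lo hi : ℝ) (w : Fin d → ℝ) : ℝ :=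
  ramp ((hi - ∑ t, approxSq m (ramp |w t|)) / (hi - lo))

theorem bump_eq_one {m : ℕ} {lo hi a : ℝ} {w : Fin d → ℝ} (hw : lpNorm 2 w ≤ a)
    (hlo : a ^ 2 + d / 4 ^ (m + 1) ≤ lo) (hlohi : lo < hi) : bump m lo hi w = 1 := by
  have hsum : ∑ t, approxSq m (ramp |w t|) ≤ lo :=
    calc ∑ t, approxSq m (ramp |w t|) ≤ ∑ t, (ramp |w t| ^ 2 + 1 / 4 ^ (m + 1)) :=
          Finset.sum_le_sum fun t _ ↦ approxSq_le m _
      _ = ∑ t, ramp |w t| ^ 2 + d / 4 ^ (m + 1) := by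
          simp [Finset.sum_add_distrib, div_eq_mul_inv]
      _ ≤ lpNorm 2 w ^ 2 + d / 4 ^ (m + 1) := by gcongr; exact sum_ramp_abs_sq_le w
      _ ≤ a ^ 2 + d / 4 ^ (m + 1) := by gcongr; exact lpNorm_two_nonneg w
      _ ≤ lo := hlo
  refine ramp_of_one_le ?_
  rw [one_le_div₀ (sub_pos.2 hlohi)]
  linarith

theorem bump_eq_zero (m : ℕ) {lo b : ℝ} {w : Fin d → ℝ} (hb : b ∈ Set.Icc 0 1)
    (hbw : b ≤ lpNorm 2 w) (hlo : lo ≤ b ^ 2) : bump m lo (b ^ 2) w = 0 := by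
  have hsum : b ^ 2 ≤ ∑ t, approxSq m (ramp |w t|) :=
    (sq_le_sum_ramp_abs_sq hb hbw).trans <|
      Finset.sum_le_sum fun t _ ↦ sq_le_approxSq m (ramp_mem_Icc _)
  exact ramp_of_nonpos (div_nonpos_of_nonpos_of_nonneg (sub_nonpos.2 hsum) (sub_nonneg.2 hlo))

end Bump

/-! ### Computing bump functions with registers -/

section Programs

variable {m : ℕ} {x : Fin d → ℝ} {o a : ℝ}

/-- Adds `ramp |δ⁻¹ * (x t - c)|` to the accumulator and prepares the scratch registers for
`tentLayers`. -/
def clipLayers (t : Fin d) (c δ : ℝ) : List (AffineLayer (d + 4) (d + 4)) :=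
  [updateRegs regOut regAcc (δ⁻¹ • (regIn t - AffineMap.const ℝ _ c))
      (-(δ⁻¹ • (regIn t - AffineMap.const ℝ _ c))),
    updateRegs regOut regAcc (regU + regV) (regU + regV - AffineMap.const ℝ _ 1),
    updateRegs regOut (regAcc + (regU - regV)) (regU - regV)
      (regU - regV - AffineMap.const ℝ _ (1 / 2))]

theorem runLayers_clipLayers (hx : 0 ≤ x) (ho : 0 ≤ o) (ha : 0 ≤ a) (t : Fin d) (c δ u v : ℝ) :
    runLayers (clipLayers t c δ) (registers x o a u v) =
      registers x o (a + ramp |δ⁻¹ * (x t - c)|) (ramp |δ⁻¹ * (x t - c)|)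
        (max (ramp |δ⁻¹ * (x t - c)| - 1 / 2) 0) := by
  have hramp : 0 ≤ ramp |δ⁻¹ * (x t - c)| := (ramp_mem_Icc _).1
  have hclip : max |δ⁻¹ * (x t - c)| 0 - max (|δ⁻¹ * (x t - c)| - 1) 0 =
      ramp |δ⁻¹ * (x t - c)| := rfl
  rw [clipLayers, runLayers_cons, runLayers_cons, runLayers_cons, runLayers_nil]
  simp only [reluLayer_updateRegs hx, AffineMap.coe_add, AffineMap.coe_sub, AffineMap.coe_neg,
    AffineMap.coe_smul, AffineMap.const_apply, Pi.add_apply, Pi.sub_apply, Pi.neg_apply,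
    Pi.smul_apply, smul_eq_mul, regIn_registers, regOut_registers, regAcc_registers,
    regU_registers, regV_registers, max_eq_left ho, max_eq_left ha,
    max_zero_add_max_neg_zero_eq_abs_self, hclip, max_eq_left hramp,
    max_eq_left (add_nonneg ha hramp)]

/-- Performs `m` steps of the tent map on `u`, where the scratch registers hold `u` and
`max (u - 1 / 2) 0`, and subtracts the corresponding terms of `approxSq` from the accumulator. -/
def tentLayers (m : ℕ) : List (AffineLayer (d + 4) (d + 4)) :=
  (List.range m).map fun j ↦
    updateRegs regOut (regAcc - ((4 ^ (j + 1) : ℝ)⁻¹) • ((2 : ℝ) • regU - (4 : ℝ) • regV))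
      ((2 : ℝ) • regU - (4 : ℝ) • regV)
      ((2 : ℝ) • regU - (4 : ℝ) • regV - AffineMap.const ℝ _ (1 / 2))

theorem runLayers_tentLayers (hx : 0 ≤ x) (ho : 0 ≤ o) (ha : 0 ≤ a) {u : ℝ}
    (hu : u ∈ Set.Icc 0 1) :
    runLayers (tentLayers m) (registers x o (a + u) u (max (u - 1 / 2) 0)) =
      registers x o (a + approxSq m u) (tent^[m] u) (max (tent^[m] u - 1 / 2) 0) := by
  induction m with
  | zero => simp [tentLayers, approxSq_zero]
  | succ m ih =>
    have hacc : a + approxSq m u - (4 ^ (m + 1))⁻¹ * tent (tent^[m] u) =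
        a + approxSq (m + 1) u := by rw [approxSq_succ, add_sub_assoc]
    have hacc_nonneg : 0 ≤ a + approxSq (m + 1) u :=
      add_nonneg ha ((sq_nonneg u).trans (sq_le_approxSq _ hu))
    have htent : 2 * tent^[m] u - 4 * max (tent^[m] u - 1 / 2) 0 = tent (tent^[m] u) := rfl
    have htent_nonneg : 0 ≤ tent (tent^[m] u) := (tent_mem_Icc (tent_iterate_mem_Icc hu m)).1
    have hsplit : tentLayers (d := d) (m + 1) = tentLayers m ++ [updateRegs regOut
        (regAcc - ((4 ^ (m + 1) : ℝ)⁻¹) • ((2 : ℝ) • regU - (4 : ℝ) • regV))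
        ((2 : ℝ) • regU - (4 : ℝ) • regV)
        ((2 : ℝ) • regU - (4 : ℝ) • regV - AffineMap.const ℝ _ (1 / 2))] := by
      simp [tentLayers, List.range_succ]
    simp only [hsplit, runLayers_append, ih, runLayers_cons, runLayers_nil,
      reluLayer_updateRegs hx, AffineMap.coe_sub, AffineMap.coe_smul, AffineMap.const_apply,
      Pi.sub_apply, Pi.smul_apply, smul_eq_mul, regOut_registers, regAcc_registers,
      regU_registers, regV_registers, htent, hacc, max_eq_left ho, max_eq_left hacc_nonneg,
      max_eq_left htent_nonneg, Function.iterate_succ_apply']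

/-- Adds the approximate square of `ramp |δ⁻¹ * (x t - c)|` to the accumulator and clears the
scratch registers. -/
def coordLayers (m : ℕ) (t : Fin d) (c δ : ℝ) : List (AffineLayer (d + 4) (d + 4)) :=
  clipLayers t c δ ++ tentLayers m ++ [updateRegs regOut regAcc 0 0]

theorem length_coordLayers (m : ℕ) (t : Fin d) (c δ : ℝ) :
    (coordLayers m t c δ).length = m + 4 := by
  simp [coordLayers, clipLayers, tentLayers]

theorem runLayers_coordLayers (hx : 0 ≤ x) (ho : 0 ≤ o) (ha : 0 ≤ a) (t : Fin d)
    (c δ u v : ℝ) :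
    runLayers (coordLayers m t c δ) (registers x o a u v) =
      registers x o (a + approxSq m (ramp |δ⁻¹ * (x t - c)|)) 0 0 := by
  have hacc : 0 ≤ a + approxSq m (ramp |δ⁻¹ * (x t - c)|) :=
    add_nonneg ha ((sq_nonneg _).trans (sq_le_approxSq _ (ramp_mem_Icc _)))
  rw [coordLayers, runLayers_append, runLayers_append, runLayers_clipLayers hx ho ha,
    runLayers_tentLayers hx ho ha (ramp_mem_Icc _)]
  simp only [runLayers_cons, runLayers_nil, reluLayer_updateRegs hx, regOut_registers,
    regAcc_registers, AffineMap.coe_zero, Pi.zero_apply, max_eq_left ho, max_eq_left hacc, max_self]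

theorem runLayers_flatMap_coordLayers (hx : 0 ≤ x) (ho : 0 ≤ o) (ha : 0 ≤ a)
    (c : Fin d → ℝ) (δ : ℝ) (l : List (Fin d)) :
    runLayers (l.flatMap fun t ↦ coordLayers m t (c t) δ) (registers x o a 0 0) =
      registers x o (a + (l.map fun t ↦ approxSq m (ramp |δ⁻¹ * (x t - c t)|)).sum) 0 0 := by
  induction l generalizing a with
  | nil => simp
  | cons t l ih =>
    have hsq : 0 ≤ approxSq m (ramp |δ⁻¹ * (x t - c t)|) :=
      (sq_nonneg _).trans (sq_le_approxSq _ (ramp_mem_Icc _))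
    rw [List.flatMap_cons, runLayers_append, runLayers_coordLayers hx ho ha,
      ih (add_nonneg ha hsq), List.map_cons, List.sum_cons, add_assoc]

/-- Replaces the output by its maximum with `y * ramp ((hi - a) / (hi - lo))`, where `a` is the
content of the accumulator, and clears the accumulator and the scratch registers. -/
def thresholdLayers (lo hi y : ℝ) : List (AffineLayer (d + 4) (d + 4)) :=
  [updateRegs regOut 0 ((hi - lo)⁻¹ • (AffineMap.const ℝ _ hi - regAcc))
      ((hi - lo)⁻¹ • (AffineMap.const ℝ _ hi - regAcc) - AffineMap.const ℝ _ 1),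
    updateRegs regOut 0 (y • (regU - regV) - regOut) 0,
    updateRegs (regOut + regU) 0 0 0]

theorem runLayers_thresholdLayers (hx : 0 ≤ x) (ho : 0 ≤ o) (lo hi y u v : ℝ) :
    runLayers (thresholdLayers lo hi y) (registers x o a u v) =
      registers x (max o (y * ramp ((hi - a) / (hi - lo)))) 0 0 0 := by
  have hramp : max ((hi - lo)⁻¹ * (hi - a)) 0 - max ((hi - lo)⁻¹ * (hi - a) - 1) 0 =
      ramp ((hi - a) / (hi - lo)) := by rw [ramp, inv_mul_eq_div]
  have hmax (z : ℝ) : max (o + max (z - o) 0) 0 = max o z := by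
    rw [max_eq_left (add_nonneg ho (le_max_right _ _)), ← max_add_add_left, add_sub_cancel,
      add_zero, max_comm]
  rw [thresholdLayers, runLayers_cons, runLayers_cons, runLayers_cons, runLayers_nil]
  simp only [reluLayer_updateRegs hx, AffineMap.coe_add, AffineMap.coe_sub, AffineMap.coe_smul,
    AffineMap.coe_zero, AffineMap.const_apply, Pi.add_apply, Pi.sub_apply, Pi.smul_apply,
    Pi.zero_apply, smul_eq_mul, regOut_registers, regAcc_registers, regU_registers,
    regV_registers, max_eq_left ho, max_self, hramp, hmax]

/-- Replaces the output by its maximum with `y` times the bump function centred at `c`. -/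
def bumpLayers (m : ℕ) (lo hi δ : ℝ) (c : Fin d → ℝ) (y : ℝ) :
    List (AffineLayer (d + 4) (d + 4)) :=
  ((List.finRange d).flatMap fun t ↦ coordLayers m t (c t) δ) ++ thresholdLayers lo hi y

theorem length_bumpLayers (m : ℕ) (lo hi δ : ℝ) (c : Fin d → ℝ) (y : ℝ) :
    (bumpLayers m lo hi δ c y).length = d * (m + 4) + 3 := by
  simp [bumpLayers, thresholdLayers, List.length_flatMap, length_coordLayers]

theorem runLayers_bumpLayers (hx : 0 ≤ x) (ho : 0 ≤ o) (lo hi δ : ℝ) (c : Fin d → ℝ) (y : ℝ) :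
    runLayers (bumpLayers m lo hi δ c y) (registers x o 0 0 0) =
      registers x (max o (y * bump m lo hi (δ⁻¹ • (x - c)))) 0 0 0 := by
  rw [bumpLayers, runLayers_append, runLayers_flatMap_coordLayers hx ho le_rfl, zero_add,
    runLayers_thresholdLayers hx ho, ← Fin.sum_univ_def]
  rfl

theorem runLayers_flatMap_bumpLayers {N : ℕ} (hx : 0 ≤ x) (ho : 0 ≤ o) (lo hi δ : ℝ)
    (c : Fin N → Fin d → ℝ) (y : Fin N → ℝ) (l : List (Fin N)) :
    runLayers (l.flatMap fun j ↦ bumpLayers m lo hi δ (c j) (y j)) (registers x o 0 0 0) =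
      registers x ((l.map fun j ↦ y j * bump m lo hi (δ⁻¹ • (x - c j))).foldl max o) 0 0 0 := by
  induction l generalizing o with
  | nil => rfl
  | cons j l ih =>
    rw [List.flatMap_cons, runLayers_append, runLayers_bumpLayers hx ho,
      ih (ho.trans (le_max_left _ _)), List.map_cons, List.foldl_cons]

end Programs

end Registers

/-! ### The memorizing network -/

section Memorization

variable {N d k m : ℕ}

theorem fold_max_eq_of_forall_le {ι β : Type*} [LinearOrder β] {s : Finset ι} {f : ι → β}
    {b : β} {i : ι} (hi : i ∈ s) (hb : b ≤ f i) (hf : ∀ j ∈ s, f j ≤ f i) :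
    s.fold max b f = f i :=
  le_antisymm (Finset.fold_max_le (f i) |>.2 ⟨hb, hf⟩)
    (Finset.le_fold_max (f i) |>.2 (Or.inr ⟨i, hi, le_rfl⟩))

theorem fold_max_univ_eq_foldl {β : Type*} [LinearOrder β] (b : β) (f : Fin N → β) :
    Finset.univ.fold max b f = ((List.finRange N).map f).foldl max b := by
  rw [Finset.fold, Fin.univ_def, Multiset.map_coe, Multiset.coe_fold_l]

/-- The first hidden layer, which translates the input by `B` into the nonnegative orthant, where
ReLU units can store it, and initializes the working registers with `0`. -/
def loadLayer (d : ℕ) (B : ℝ) : AffineLayer d (d + 4) :=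
  AffineMap.pi <| registers
    (fun t ↦ (AffineMap.proj t : (Fin d → ℝ) →ᵃ[ℝ] ℝ) + AffineMap.const ℝ _ B) 0 0 0 0

theorem reluLayer_loadLayer {x : Fin d → ℝ} {B : ℝ} (hx : ∀ t, 0 ≤ x t + B) :
    reluLayer (loadLayer d B) x = registers (fun t ↦ x t + B) 0 0 0 0 := by
  simp [loadLayer, reluLayer_pi_registers, hx]

/-- The network reading off the output register through a hidden layer with `k` neurons, which
accounts for the exact width of the networks below. -/
def readout (d k : ℕ) [NeZero k] : MLP (d + 4) 1 :=
  .consAffine (AffineMap.pi fun _ : Fin k ↦ regOut) (.last (Matrix.single 0 0 1) 0)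

theorem eval_readout [NeZero k] (x : Fin d → ℝ) {o : ℝ} (ho : 0 ≤ o) (a u v : ℝ) :
    (readout d k).eval (registers x o a u v) 0 = o := by
  simp [readout, MLP.eval_consAffine, MLP.eval, Matrix.single_mulVec, reluLayer, ho]

theorem exists_mlp_eval_eq_fold_max (hk : d + 4 ≤ k) (m : ℕ) (lo hi δ B : ℝ)
    (c : Fin N → Fin d → ℝ) (y : Fin N → ℝ) :
    ∃ net : MLP d 1, net.width = k ∧ net.depth = N * (d * (m + 4) + 3) + 3 ∧
      ∀ x, (∀ t, 0 ≤ x t + B) →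
        net.eval x 0 = Finset.univ.fold max 0 fun j ↦ y j * bump m lo hi (δ⁻¹ • (x - c j)) := by
  have : NeZero k := ⟨by omega⟩
  have hwidth : (readout d k).width = k := Nat.max_zero k
  let body := (List.finRange N).flatMap fun j ↦ bumpLayers m lo hi δ (fun t ↦ c j t + B) (y j)
  refine ⟨.consAffine (loadLayer d B) (.prependLayers body (readout d k)), ?_, ?_, fun x hx ↦ ?_⟩
  · calc max (d + 4) (MLP.prependLayers body (readout d k)).width
        = max (d + 4) k := by rw [MLP.width_prependLayers _ (hk.trans_eq hwidth.symm), hwidth]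
      _ = k := max_eq_right hk
  · calc (MLP.prependLayers body (readout d k)).depth + 1
        = body.length + 2 + 1 := by rw [MLP.depth_prependLayers]; rfl
      _ = N * (d * (m + 4) + 3) + 3 := by
        simp [body, List.length_flatMap, length_bumpLayers]
  · have hshift (j : Fin N) : (fun t ↦ x t + B) - (fun t ↦ c j t + B) = x - c j := by
      funext t
      exact add_sub_add_right_eq_sub _ _ _
    have hfold : 0 ≤ Finset.univ.fold max 0 fun j ↦ y j * bump m lo hi (δ⁻¹ • (x - c j)) :=
      (Finset.le_fold_max 0).2 (Or.inl le_rfl)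
    rw [MLP.eval_consAffine, reluLayer_loadLayer hx, MLP.eval_prependLayers,
      runLayers_flatMap_bumpLayers hx le_rfl]
    simp only [hshift, ← fold_max_univ_eq_foldl]
    exact eval_readout _ hfold 0 0 0

theorem neg_sum_sum_abs_le (X : Fin N → Fin d → ℝ) (i : Fin N) (t : Fin d) :
    -∑ j, ∑ s, |X j s| ≤ X i t := by
  refine neg_le.1 ((neg_le_abs _).trans ?_)
  calc |X i t| ≤ ∑ s, |X i s| :=
        Finset.single_le_sum (f := fun s ↦ |X i s|) (fun _ _ ↦ abs_nonneg _) (Finset.mem_univ t)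
    _ ≤ ∑ j, ∑ s, |X j s| :=
        Finset.single_le_sum (f := fun j ↦ ∑ s, |X j s|)
          (fun _ _ ↦ Finset.sum_nonneg fun _ _ ↦ abs_nonneg _) (Finset.mem_univ i)

theorem fold_max_bump_eq {X : Fin N → Fin d → ℝ} {Y : Fin N → ℕ} {δ ρ : ℝ} (hδ : 0 < δ)
    (hm : d / 4 ^ (m + 1) < 1 - 2 * ρ) (hsep : ∀ i j, Y i ≠ Y j → δ ≤ lpNorm 2 (X i - X j))
    {i : Fin N} {x : Fin d → ℝ} (hx : lpNorm 2 (x - X i) ≤ ρ * δ) :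
    (Finset.univ.fold max 0 fun j ↦
      (Y j : ℝ) * bump m (ρ ^ 2 + d / 4 ^ (m + 1)) ((1 - ρ) ^ 2) (δ⁻¹ • (x - X j))) = Y i := by
  have hscale (j : Fin N) : lpNorm 2 (δ⁻¹ • (x - X j)) = lpNorm 2 (x - X j) / δ := by
    rw [lpNorm_two_smul, abs_of_pos (inv_pos.2 hδ), inv_mul_eq_div]
  have hρ : 0 ≤ ρ := nonneg_of_mul_nonneg_left ((lpNorm_two_nonneg _).trans hx) hδ
  have herr : (0 : ℝ) ≤ d / 4 ^ (m + 1) := by positivity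
  have hgap : ρ ^ 2 + d / 4 ^ (m + 1) < (1 - ρ) ^ 2 := by linear_combination hm
  have hnear : bump m (ρ ^ 2 + d / 4 ^ (m + 1)) ((1 - ρ) ^ 2) (δ⁻¹ • (x - X i)) = 1 :=
    bump_eq_one (by rwa [hscale, div_le_iff₀ hδ]) le_rfl hgap
  have hfar (j : Fin N) (hij : Y i ≠ Y j) :
      bump m (ρ ^ 2 + d / 4 ^ (m + 1)) ((1 - ρ) ^ 2) (δ⁻¹ • (x - X j)) = 0 := by
    refine bump_eq_zero m ⟨by linarith, by linarith⟩ ?_ hgap.le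
    rw [hscale, le_div_iff₀ hδ]
    linarith [hsep i j hij, lpNorm_two_sub_le (X i) x (X j)]
  have hle (j : Fin N) : (Y j : ℝ) *
      bump m (ρ ^ 2 + d / 4 ^ (m + 1)) ((1 - ρ) ^ 2) (δ⁻¹ • (x - X j)) ≤ Y i := by
    rcases eq_or_ne (Y i) (Y j) with hij | hij
    · rw [hij]
      exact mul_le_of_le_one_right (Nat.cast_nonneg _) (ramp_mem_Icc _).2
    · rw [hfar j hij, mul_zero]
      exact Nat.cast_nonneg _
  rw [fold_max_eq_of_forall_le (Finset.mem_univ i)] <;> simp [hnear, hle]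

theorem exists_mlp_robustMem_two (hk : d + 4 ≤ k) {δ ρ : ℝ} (hδ : 0 < δ)
    (hm : d / 4 ^ (m + 1) < 1 - 2 * ρ) (X : Fin N → Fin d → ℝ) (Y : Fin N → ℕ)
    (hsep : ∀ i j, Y i ≠ Y j → δ ≤ lpNorm 2 (X i - X j)) :
    ∃ net : MLP d 1, net.width = k ∧ net.depth = N * (d * (m + 4) + 3) + 3 ∧
      RobustMem 2 (ρ * δ) X Y fun x ↦ net.eval x 0 := by
  obtain ⟨net, hwidth, hdepth, heval⟩ := exists_mlp_eval_eq_fold_max hk m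
    (ρ ^ 2 + d / 4 ^ (m + 1)) ((1 - ρ) ^ 2) δ (ρ * δ + ∑ j, ∑ s, |X j s|) X fun j ↦ (Y j : ℝ)
  refine ⟨net, hwidth, hdepth, fun i x hx ↦ (heval x fun t ↦ ?_).trans
    (fold_max_bump_eq hδ hm hsep hx)⟩
  have hnear : |x t - X i t| ≤ ρ * δ := (abs_apply_le_lpNorm_two (x - X i) t).trans hx
  linarith [neg_sum_sum_abs_le X i t, (abs_le.1 hnear).1]

end Memorization

/-! ### Depth -/

theorem exists_nat_div_four_pow_lt {a ε : ℝ} (hε : 0 < ε) (hεa : ε ≤ a) :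
    ∃ m : ℕ, (m : ℝ) ≤ Real.logb 2 (a / ε) + 1 ∧ a / 4 ^ (m + 1) < ε := by
  have hone : 1 ≤ a / ε := (one_le_div₀ hε).2 hεa
  refine ⟨⌈Real.logb 2 (a / ε)⌉₊,
    (Nat.ceil_lt_add_one (Real.logb_nonneg one_lt_two hone)).le, ?_⟩
  set m := ⌈Real.logb 2 (a / ε)⌉₊
  rw [div_lt_comm₀ (by positivity) hε]
  calc a / ε ≤ (2 : ℝ) ^ m := by
        rw [← Real.rpow_natCast, ← Real.logb_le_iff_le_rpow one_lt_two (by positivity)]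
        exact Nat.le_ceil _
    _ < 2 ^ (m + 1) := pow_lt_pow_right₀ one_lt_two m.lt_succ_self
    _ ≤ 4 ^ (m + 1) := by gcongr; norm_num

theorem depth_le_mul_of_le {N d m : ℕ} {L : ℝ} (hN : 1 ≤ N) (hd : 2 ≤ d) (hL : 1 ≤ L)
    (hm : (m : ℝ) ≤ L + 1) : ((N * (d * (m + 4) + 3) + 3 : ℕ) : ℝ) ≤ 9 * N * d * L := by
  have hN' : (1 : ℝ) ≤ N := by exact_mod_cast hN
  have hd' : (2 : ℝ) ≤ d := by exact_mod_cast hd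
  push_cast
  calc (N * (d * (m + 4) + 3) + 3 : ℝ) ≤ N * (d * (m + 4) + 3) + 3 * N := by linarith
    _ = N * (d * (m + 4) + 6) := by ring
    _ ≤ N * (d * (m + 4) + 3 * d) := by gcongr; linarith
    _ = N * d * (m + 7) := by ring
    _ ≤ N * d * (9 * L) := by gcongr; linarith
    _ = 9 * N * d * L := by ring

theorem robust_memorization_large_width_general {N d k : ℕ} {p : ℝ≥0∞} {σ δ : ℝ} (hN : 1 ≤ N)
    (hd : 2 ≤ d) (hk : d + 4 ≤ k) (hp : 0 < p) (hσ : 0 ≤ σ) (hδ : 0 < δ)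
    (hσδ : σ / δ < 1 / (2 * cplus p d)) (X : Fin N → Fin d → ℝ) (Y : Fin N → ℕ)
    (hsep : ∀ i j, Y i ≠ Y j → δ ≤ lpNorm 2 (X i - X j)) :
    ∃ net : MLP d 1, net.width = k ∧
      (net.depth : ℝ) ≤ 9 * N * d * Real.logb 2 ((d : ℝ) / (1 - 2 * cplus p d * σ / δ)) ∧
      RobustMem p σ X Y fun x ↦ net.eval x 0 := by
  have hd' : (2 : ℝ) ≤ d := by exact_mod_cast hd
  have hc : 0 < cplus p d := cplus_pos p (by omega)
  have hmargin_pos : 0 < 1 - 2 * cplus p d * σ / δ := by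
    rw [lt_div_iff₀ (by positivity)] at hσδ
    linear_combination hσδ
  have hmargin_le : 1 - 2 * cplus p d * σ / δ ≤ 1 := sub_le_self 1 (by positivity)
  have hlog : 1 ≤ Real.logb 2 (d / (1 - 2 * cplus p d * σ / δ)) := by
    rw [Real.le_logb_iff_rpow_le one_lt_two (by positivity), Real.rpow_one,
      le_div_iff₀ hmargin_pos]
    linarith
  obtain ⟨m, hm, herr⟩ := exists_nat_div_four_pow_lt (a := (d : ℝ)) hmargin_pos (by linarith)
  obtain ⟨net, hwidth, hdepth, hmem⟩ := exists_mlp_robustMem_two (ρ := cplus p d * σ / δ) hk hδ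
    (herr.trans_eq (by ring)) X Y hsep
  rw [div_mul_cancel₀ _ hδ.ne'] at hmem
  exact ⟨net, hwidth, hdepth ▸ depth_le_mul_of_le hN hd hlog hm, hmem.of_two hp⟩

/-- **Robust memorization with large width** (Theorem: width `k ≥ d + 6`). -/
theorem robust_memorization_large_width :
    ∃ C₀ : ℝ, 0 < C₀ ∧
      ∀ (N d C k : ℕ) (p : ℝ≥0∞) (σ δ : ℝ),
        2 ≤ N → 2 ≤ d → 2 ≤ C → d + 6 ≤ k → 0 < p → 0 < σ → 0 < δ →
        σ / δ < 1 / (2 * cplus p d) →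
        ∀ (X : Fin N → Fin d → ℝ) (Y : Fin N → ℕ),
          (∀ i, 1 ≤ Y i ∧ Y i ≤ C) → Separated 2 δ X Y →
          ∃ net : MLP d 1, net.width = k ∧
            (net.depth : ℝ) ≤
              C₀ * N * d * Real.logb 2 ((d : ℝ) / (1 - 2 * cplus p d * σ / δ)) ∧
            RobustMem p σ X Y (fun x => net.eval x 0) :=
  ⟨9, by norm_num, fun _ _ _ _ _ _ _ hN hd _ hk hp hσ hδ hσδ X Y _ hsep ↦
    robust_memorization_large_width_general (one_le_two.trans hN) hd (by omega) hp hσ.le hδ hσδ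
      X Y hsep.1⟩

end
end

section
/- Let N, d be natural numbers at least 2, let p ∈ (0, ∞], let k be a natural number with 1 ≤ k ≤ d − 1, and let σ, δ > 0 satisfy σ/δ > b_{p,d} · N^{−2/k}, where b_{p,d} = 2416 · d^{[1/p − 1/2]_+} (with 1/∞ = 0). Then there exists a δ-separated dataset D of size N with 2 classes in ℝ^d such that no feedforward ReLU neural network f : ℝ^d → ℝ of width k (of any depth) (σ, p)-robustly memorizes D. -/
open scoped ENNReal BigOperators

noncomputable section

/-!
The two classes are copies of one `η`-net of the unit sphere in a `(k + 1)`-dimensional subspace,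
scaled to concentric spheres of radii `η * R` and `R`. Every line through the origin then passes
within `η ^ 2 * R` of a difference `b - a` of points of opposite classes. Comparing volumes in the
shell around the sphere, the net has `O(η⁻¹) ^ k` points, so `N` points suffice for `η` of order
`N ^ (-1 / k)`.

A network of width `k` factors through a linear map of rank at most `k`, whose kernel contains a
line of the subspace. If `b - a - c` is small for some `c` on that line, then with
`w = (b - a - c) / 2` the points `a + w` and `b - w` are close to `a` and `b` but differ by `c`, so
the network cannot tell them apart. Replacing the Euclidean norm of `w` by its `l_p` norm costs the
factor `d ^ [1 / p - 1 / 2]_+`.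
-/

section Packing

open MeasureTheory Metric Module
open scoped NNReal

lemma packingNumber_ne_top_of_isCompact {X : Type*} [PseudoEMetricSpace X] {ε : ℝ≥0} (hε : ε ≠ 0)
    {K : Set X} (hK : IsCompact K) : packingNumber ε K ≠ ⊤ := by
  obtain ⟨C, -, hC, hcover⟩ := exists_finite_isCover_of_isCompact (half_pos hε.bot_lt).ne' hK
  have hle : packingNumber (2 * (ε / 2)) K ≤ C.encard :=
    (packingNumber_two_mul_le_externalCoveringNumber _ K).trans
      hcover.externalCoveringNumber_le_encard
  rw [mul_div_cancel₀ ε two_ne_zero] at hle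
  exact (hle.trans_lt hC.encard_lt_top).ne

variable {E : Type*} [NormedAddCommGroup E] [NormedSpace ℝ E]

lemma measureReal_ball_eq_pow_mul [FiniteDimensional ℝ E] [MeasurableSpace E] [BorelSpace E]
    (μ : Measure E) [μ.IsAddHaarMeasure] (x : E) {r : ℝ} (hr : 0 < r) :
    μ.real (ball x r) = r ^ finrank ℝ E * μ.real (ball 0 1) := by
  rw [measureReal_def, Measure.addHaar_ball_of_pos μ x hr, ENNReal.toReal_mul,
    ENNReal.toReal_ofReal (by positivity), measureReal_def]

lemma measureReal_biUnion_ball_of_isSeparated [FiniteDimensional ℝ E] [MeasurableSpace E]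
    [BorelSpace E] (μ : Measure E) [μ.IsAddHaarMeasure] {η : ℝ≥0} (hη : 0 < η) {S : Finset E}
    (hsep : IsSeparated η (S : Set E)) :
    μ.real (⋃ s ∈ S, ball s (η / 2)) =
      S.card * ((η / 2 : ℝ) ^ finrank ℝ E * μ.real (ball 0 1)) := by
  have hdisj : (S : Set E).PairwiseDisjoint (ball · (η / 2 : ℝ)) := fun s hs s' hs' hne ↦ by
    have hlt : (η : ℝ≥0∞) < edist s s' := hsep hs hs' hne
    rw [edist_nndist] at hlt
    refine ball_disjoint_ball ?_
    rw [add_halves]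
    exact_mod_cast hlt.le
  rw [measureReal_biUnion_finset hdisj fun _ _ ↦ measurableSet_ball,
    Finset.sum_congr rfl fun s _ ↦ measureReal_ball_eq_pow_mul μ s (by positivity),
    Finset.sum_const, nsmul_eq_mul]

lemma card_mul_pow_add_pow_le_of_isSeparated_sphere [FiniteDimensional ℝ E] {η : ℝ≥0} (hη₀ : 0 < η)
    (hη₂ : η < 2) {S : Finset E} (hS : ↑S ⊆ sphere (0 : E) 1) (hsep : IsSeparated η (S : Set E)) :
    (S.card : ℝ) * (η / 2 : ℝ) ^ finrank ℝ E + (1 - η / 2 : ℝ) ^ finrank ℝ E ≤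
      (1 + η / 2 : ℝ) ^ finrank ℝ E := by
  borelize E
  set x : ℝ := η / 2 with hx
  have hx₀ : 0 < x := by positivity
  have hx₁ : 0 < 1 - x := by
    have : (η : ℝ) < 2 := mod_cast hη₂
    linarith
  let μ : Measure E := Measure.addHaar
  have hμ : 0 < μ.real (ball 0 1) :=
    ENNReal.toReal_pos (measure_ball_pos μ 0 one_pos).ne' measure_ball_lt_top.ne
  have hinner : Disjoint (⋃ s ∈ S, ball s x) (ball 0 (1 - x)) :=
    Set.disjoint_iUnion₂_left.2 fun s hs ↦ ball_disjoint_ball <| by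
      rw [mem_sphere.1 (hS hs)]
      linarith
  have houter : (⋃ s ∈ S, ball s x) ∪ ball 0 (1 - x) ⊆ ball 0 (1 + x) :=
    Set.union_subset
      (Set.iUnion₂_subset fun s hs ↦ ball_subset_ball' <| by rw [mem_sphere.1 (hS hs), add_comm])
      (ball_subset_ball (by linarith))
  have hfinite : μ (⋃ s ∈ S, ball s x) ≠ ⊤ :=
    measure_ne_top_of_subset (Set.subset_union_left.trans houter) measure_ball_lt_top.ne
  refine le_of_mul_le_mul_right ?_ hμ
  calc (S.card * x ^ finrank ℝ E + (1 - x) ^ finrank ℝ E) * μ.real (ball 0 1)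
      = μ.real (⋃ s ∈ S, ball s x) + μ.real (ball 0 (1 - x)) := by
        rw [measureReal_biUnion_ball_of_isSeparated μ hη₀ hsep, measureReal_ball_eq_pow_mul μ 0 hx₁]
        ring
    _ = μ.real ((⋃ s ∈ S, ball s x) ∪ ball 0 (1 - x)) :=
        (measureReal_union hinner measurableSet_ball hfinite).symm
    _ ≤ μ.real (ball 0 (1 + x)) := measureReal_mono houter
    _ = (1 + x) ^ finrank ℝ E * μ.real (ball 0 1) :=
        measureReal_ball_eq_pow_mul μ 0 (by positivity)

lemma card_le_of_isSeparated_sphere [FiniteDimensional ℝ E] {k : ℕ} (hE : finrank ℝ E = k + 1)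
    {η : ℝ≥0} (hη₀ : 0 < η) (hη₂ : η < 2) {S : Finset E} (hS : ↑S ⊆ sphere (0 : E) 1)
    (hsep : IsSeparated η (S : Set E)) :
    (S.card : ℝ) ≤ 2 * (k + 1) * (1 + 2 / η) ^ k := by
  have hvol := card_mul_pow_add_pow_le_of_isSeparated_sphere hη₀ hη₂ hS hsep
  rw [hE] at hvol
  set x : ℝ := η / 2 with hx
  have hx₀ : 0 < x := by positivity
  have hx₁ : x < 1 := by
    have : (η : ℝ) < 2 := mod_cast hη₂
    linarith
  have hshell : (1 + x) ^ (k + 1) - (1 - x) ^ (k + 1) ≤ 2 * x * (k + 1) * (1 + x) ^ k := by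
    have hmax : max |1 + x| |1 - x| = 1 + x := by
      rw [abs_of_pos (by linarith), abs_of_pos (by linarith), max_eq_left (by linarith)]
    have := (le_abs_self _).trans (abs_pow_sub_pow_le (1 + x) (1 - x) (k + 1))
    rwa [hmax, show 1 + x - (1 - x) = 2 * x by ring, abs_of_pos (by positivity), Nat.cast_succ,
      Nat.add_sub_cancel] at this
  have hscale : 2 * x * (k + 1) * (1 + x) ^ k =
      2 * (k + 1) * (1 + 2 / η) ^ k * x ^ (k + 1) := by
    have : 1 + x = (1 + 2 / η) * x := by rw [hx]; field_simp; ring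
    rw [this, mul_pow]
    ring
  exact le_of_mul_le_mul_right (by linarith) (pow_pos hx₀ (k + 1))

lemma exists_isCover_sphere_card_le [FiniteDimensional ℝ E] {k : ℕ} (hE : finrank ℝ E = k + 1)
    {η : ℝ≥0} (hη₀ : 0 < η) (hη₂ : η < 2) :
    ∃ S : Finset E, ↑S ⊆ sphere (0 : E) 1 ∧ IsCover η (sphere (0 : E) 1) S ∧
      (S.card : ℝ) ≤ 2 * (k + 1) * (1 + 2 / η) ^ k := by
  have hfin := packingNumber_ne_top_of_isCompact hη₀.ne' (isCompact_sphere (0 : E) 1)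
  obtain ⟨S, hS⟩ : ∃ S : Finset E, ↑S = maximalSeparatedSet η (sphere (0 : E) 1) :=
    (Set.encard_ne_top_iff.1 <| (encard_maximalSeparatedSet hfin).trans_ne hfin).exists_finset_coe
  have hsub : ↑S ⊆ sphere (0 : E) 1 := hS ▸ maximalSeparatedSet_subset
  exact ⟨S, hsub, hS ▸ isCover_maximalSeparatedSet hfin,
    card_le_of_isSeparated_sphere hE hη₀ hη₂ hsub (hS ▸ isSeparated_maximalSeparatedSet)⟩

end Packing

/-- Every line through the origin passes within `ε` of some difference `b - a` with `a ∈ A` and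
`b ∈ B`, so that a linear map with nontrivial kernel nearly identifies two points of the two
classes. -/
def DifferencesNearLines {E : Type*} [NormedAddCommGroup E] [NormedSpace ℝ E] (ε : ℝ)
    (A B : Set E) : Prop :=
  ∀ v : E, v ≠ 0 → ∃ a ∈ A, ∃ b ∈ B, ∃ t : ℝ, ‖b - a - t • v‖ ≤ ε

section ConcentricSpheres

open Metric Module
open scoped NNReal Pointwise

variable {E : Type*} [NormedAddCommGroup E] [NormedSpace ℝ E] {S : Set E}

lemma DifferencesNearLines.mono {A B : Set E} {ε ε' : ℝ} (h : DifferencesNearLines ε A B)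
    (hε : ε ≤ ε') : DifferencesNearLines ε' A B := fun v hv ↦
  let ⟨a, ha, b, hb, t, ht⟩ := h v hv
  ⟨a, ha, b, hb, t, ht.trans hε⟩

lemma differencesNearLines_singleton_zero (e : E) : DifferencesNearLines ‖e‖ {0} {e} :=
  fun _ _ ↦ ⟨0, rfl, e, rfl, 0, by simp⟩

lemma exists_norm_sub_norm_smul_le {η : ℝ≥0} (hcover : IsCover η (sphere (0 : E) 1) S) {x : E}
    (hx : x ≠ 0) : ∃ s ∈ S, ‖x - ‖x‖ • s‖ ≤ η * ‖x‖ := by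
  have hunit : ‖x‖⁻¹ • x ∈ sphere (0 : E) 1 :=
    mem_sphere_zero_iff_norm.2 (norm_smul_inv_norm (𝕜 := ℝ) hx)
  obtain ⟨s, hs, hdist⟩ := Set.mem_iUnion₂.1 (isCover_iff_subset_iUnion_closedBall.1 hcover hunit)
  refine ⟨s, hs, ?_⟩
  calc ‖x - ‖x‖ • s‖ = ‖‖x‖ • (‖x‖⁻¹ • x - s)‖ := by
        rw [smul_sub, smul_inv_smul₀ (norm_ne_zero_iff.2 hx)]
    _ = ‖x‖ * dist (‖x‖⁻¹ • x) s := by rw [norm_smul, norm_norm, dist_eq_norm]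
    _ ≤ η * ‖x‖ := by
        rw [mul_comm]
        gcongr
        exact hdist

lemma exists_norm_sub_smul_eq {x v : E} {r t : ℝ} (hnear : ‖x - t • v‖ ≤ r) (hr : r ≤ ‖x‖) :
    ∃ t' : ℝ, ‖x - t' • v‖ = r :=
  mem_range_of_exists_le_of_exists_ge (f := fun t' : ℝ ↦ ‖x - t' • v‖) (by fun_prop) ⟨t, hnear⟩
    ⟨0, by simpa using hr⟩

/- The line `ℝ v` passes within `η * R` of some outer point `R • s`; translated by `-R • s` it
therefore meets the inner sphere of radius `η * R`, whose points are within `η * (η * R)` of the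
inner class. -/
lemma differencesNearLines_smul_smul {η : ℝ≥0} (hη₀ : 0 < η) (hη₁ : η ≤ 1)
    (hS : S ⊆ sphere (0 : E) 1) (hcover : IsCover η (sphere (0 : E) 1) S) {R : ℝ} (hR : 0 < R) :
    DifferencesNearLines (η ^ 2 * R) ((η * R : ℝ) • S) (R • S) := by
  intro v hv
  have hηR : 0 < η * R := by positivity
  obtain ⟨s, hs, hsv⟩ := exists_norm_sub_norm_smul_le hcover hv
  have hline : ‖R • s - (R / ‖v‖) • v‖ ≤ η * R := by
    have hv' : 0 < ‖v‖ := norm_pos_iff.2 hv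
    calc ‖R • s - (R / ‖v‖) • v‖ = ‖(R / ‖v‖) • (‖v‖ • s - v)‖ := by
          rw [smul_sub, smul_smul, div_mul_cancel₀ R hv'.ne']
      _ = R / ‖v‖ * ‖v - ‖v‖ • s‖ := by
          rw [norm_smul, norm_sub_rev, Real.norm_of_nonneg (by positivity)]
      _ ≤ R / ‖v‖ * (η * ‖v‖) := by gcongr
      _ = η * R := by field_simp
  have hRs : ‖R • s‖ = R := by
    rw [norm_smul, mem_sphere_zero_iff_norm.1 (hS hs), mul_one, Real.norm_of_nonneg hR.le]
  obtain ⟨t, ht⟩ := exists_norm_sub_smul_eq hline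
    (hRs.symm ▸ mul_le_of_le_one_left hR.le (mod_cast hη₁))
  obtain ⟨s', hs', hclose⟩ := exists_norm_sub_norm_smul_le hcover
    (norm_ne_zero_iff.1 (ht.trans_ne hηR.ne'))
  refine ⟨_, Set.smul_mem_smul_set hs', _, Set.smul_mem_smul_set hs, t, ?_⟩
  rw [ht] at hclose
  rw [sub_right_comm, sq, mul_assoc]
  exact hclose

lemma isLeast_dist_smul_smul (hS : S ⊆ sphere (0 : E) 1) (hne : S.Nonempty) {r R : ℝ} (hr : 0 ≤ r)
    (hrR : r ≤ R) : IsLeast (Set.image2 dist (r • S) (R • S)) (R - r) := by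
  have hnorm {ρ : ℝ} (hρ : 0 ≤ ρ) {s : E} (hs : s ∈ S) : ‖ρ • s‖ = ρ := by
    rw [norm_smul, mem_sphere_zero_iff_norm.1 (hS hs), mul_one, Real.norm_of_nonneg hρ]
  constructor
  · obtain ⟨s, hs⟩ := hne
    refine ⟨_, Set.smul_mem_smul_set hs, _, Set.smul_mem_smul_set hs, ?_⟩
    rw [dist_comm, dist_eq_norm, ← sub_smul, hnorm (sub_nonneg.2 hrR) hs]
  · rintro _ ⟨_, ⟨s, hs, rfl⟩, _, ⟨s', hs', rfl⟩, rfl⟩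
    rw [dist_comm, dist_eq_norm]
    simpa only [hnorm hr hs, hnorm (hr.trans hrR) hs'] using norm_sub_norm_le (R • s') (r • s)

lemma exists_concentric_classes [FiniteDimensional ℝ E] {k : ℕ} (hE : finrank ℝ E = k + 1)
    {η : ℝ≥0} (hη₀ : 0 < η) (hη : η ≤ 1 / 2) {δ : ℝ} (hδ : 0 < δ) :
    ∃ A B : Finset E, (A.card + B.card : ℝ) ≤ 4 * (k + 1) * (1 + 2 / η) ^ k ∧
      IsLeast (Set.image2 dist (A : Set E) B) δ ∧
      DifferencesNearLines (2 * η ^ 2 * δ) (A : Set E) B := by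
  classical
  have hη_half : (η : ℝ) ≤ 1 / 2 := mod_cast hη
  have hη₁ : η ≤ 1 := mod_cast hη_half.trans (by norm_num)
  obtain ⟨S, hS, hcover, hcard⟩ := exists_isCover_sphere_card_le hE hη₀ (hη₁.trans_lt one_lt_two)
  have hne : (S : Set E).Nonempty := by
    have : Nontrivial E := nontrivial_of_finrank_pos (R := ℝ) (by omega)
    exact hcover.nonempty (NormedSpace.sphere_nonempty.2 zero_le_one)
  set R : ℝ := δ / (1 - η) with hRdef
  have hR : 0 < R := div_pos hδ (by linarith)
  have hgap : R - η * R = δ := by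
    rw [← one_sub_mul, hRdef, mul_div_cancel₀ δ (by linarith)]
  refine ⟨(η * R : ℝ) • S, R • S, ?_, ?_, ?_⟩
  · have hcard_smul (ρ : ℝ) : ((ρ • S : Finset E).card : ℝ) ≤ S.card :=
      mod_cast Finset.card_image_le
    linarith [hcard_smul (η * R), hcard_smul R]
  · rw [Finset.coe_smul_finset, Finset.coe_smul_finset, ← hgap]
    exact isLeast_dist_smul_smul hS hne (by positivity)
      (mul_le_of_le_one_left hR.le (mod_cast hη₁))
  · rw [Finset.coe_smul_finset, Finset.coe_smul_finset]
    refine (differencesNearLines_smul_smul hη₀ hη₁ hS hcover hR).mono ?_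
    have hR_le : R ≤ 2 * δ := by nlinarith
    calc (η : ℝ) ^ 2 * R ≤ η ^ 2 * (2 * δ) := by gcongr
      _ = 2 * η ^ 2 * δ := by ring

lemma four_mul_succ_le_twelve_pow {k : ℕ} (hk : 1 ≤ k) : 4 * (k + 1) ≤ 12 ^ k := by
  induction k, hk using Nat.le_induction with
  | base => norm_num
  | succ k _ ih => rw [pow_succ]; omega

lemma exists_concentric_classes_of_sixty_le [FiniteDimensional ℝ E] {k : ℕ} (hk : 1 ≤ k)
    (hE : finrank ℝ E = k + 1) {y δ : ℝ} (hy : 60 ≤ y) (hδ : 0 < δ) :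
    ∃ A B : Finset E, (A.card + B.card : ℝ) ≤ y ^ k ∧
      IsLeast (Set.image2 dist (A : Set E) B) δ ∧
      DifferencesNearLines (1800 / y ^ 2 * δ) (A : Set E) B := by
  lift y to ℝ≥0 using by linarith
  -- The radius `η = 30 / y` gives `1 + 2 / η = 1 + y / 15 ≤ y / 12` when `60 ≤ y`, and the factor
  -- `12 ^ k` gained here absorbs `4 * (k + 1)`.
  have hy₀ : 0 < y := by rw [← NNReal.coe_pos]; linarith
  have hη : 30 / y ≤ 1 / 2 := by
    rw [← NNReal.coe_le_coe]
    push_cast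
    rw [div_le_iff₀ (by positivity)]
    linarith
  obtain ⟨A, B, hcard, hleast, hlines⟩ :=
    exists_concentric_classes hE (div_pos (by norm_num) hy₀) hη hδ
  push_cast at hcard hlines
  refine ⟨A, B, hcard.trans ?_, hleast, hlines.mono (le_of_eq (by ring))⟩
  have hbase : 1 + 2 / (30 / y : ℝ) ≤ y / 12 := by
    rw [div_div_eq_mul_div]
    linarith
  calc 4 * (k + 1) * (1 + 2 / (30 / y : ℝ)) ^ k ≤ 12 ^ k * (y / 12 : ℝ) ^ k := by
        gcongr
        exact_mod_cast four_mul_succ_le_twelve_pow hk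
    _ = y ^ k := by rw [← mul_pow, mul_div_cancel₀ _ (by norm_num)]

lemma exists_classes_differencesNearLines [FiniteDimensional ℝ E] {k N : ℕ} (hk : 1 ≤ k)
    (hE : finrank ℝ E = k + 1) (hN : 2 ≤ N) {δ : ℝ} (hδ : 0 < δ) :
    ∃ A B : Finset E, A.card + B.card ≤ N ∧ IsLeast (Set.image2 dist (A : Set E) B) δ ∧
      DifferencesNearLines (4832 * (N : ℝ) ^ (-(2 : ℝ) / k) * δ) (A : Set E) B := by
  have hN₀ : (0 : ℝ) < N := by positivity
  set y : ℝ := (N : ℝ) ^ (k : ℝ)⁻¹ with hy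
  have hy₀ : 0 < y := by positivity
  have hpow : y ^ k = N := Real.rpow_inv_natCast_pow hN₀.le (by omega)
  have hexp : (N : ℝ) ^ (-(2 : ℝ) / k) = 1 / y ^ 2 := by
    rw [hy, ← Real.rpow_natCast, ← Real.rpow_mul hN₀.le, one_div, ← Real.rpow_neg hN₀.le,
      Nat.cast_two]
    congr 1
    ring
  rw [hexp, mul_one_div]
  obtain hsmall | hlarge := lt_or_ge y 60
  · have : Nontrivial E := nontrivial_of_finrank_pos (R := ℝ) (by omega)
    obtain ⟨e, he⟩ := exists_norm_eq E hδ.le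
    refine ⟨{0}, {e}, by simpa using hN, by simp [he, isLeast_singleton], ?_⟩
    rw [Finset.coe_singleton, Finset.coe_singleton]
    refine (differencesNearLines_singleton_zero e).mono ?_
    rw [he]
    exact le_mul_of_one_le_left hδ.le ((one_le_div (by positivity)).2 (by nlinarith))
  · obtain ⟨A, B, hcard, hleast, hlines⟩ := exists_concentric_classes_of_sixty_le hk hE hlarge hδ
    rw [hpow] at hcard
    exact ⟨A, B, mod_cast hcard, hleast, hlines.mono (by gcongr; norm_num)⟩

end ConcentricSpheres

section LpNorm

variable {d : ℕ} {p q : ℝ≥0∞} (x : Fin d → ℝ)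

lemma lpNorm_top : lpNorm ⊤ x = ⨆ i, |x i| := if_pos rfl

lemma lpNorm_of_ne_top (hp : p ≠ ⊤) :
    lpNorm p x = (∑ i, |x i| ^ p.toReal) ^ (1 / p.toReal) := if_neg hp

lemma lpNorm_nonneg : 0 ≤ lpNorm p x := by
  unfold lpNorm
  split_ifs
  · exact Real.iSup_nonneg fun i ↦ abs_nonneg _
  · positivity

lemma lpNorm_neg : lpNorm p (-x) = lpNorm p x := by simp [lpNorm]

lemma lpNorm_two_ofLp (x : EuclideanSpace ℝ (Fin d)) : lpNorm 2 x.ofLp = ‖x‖ := by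
  simp [lpNorm_of_ne_top, EuclideanSpace.norm_eq, Real.sqrt_eq_rpow]

lemma lpNorm_rpow_toReal (hp₀ : 0 < p) (hp : p ≠ ⊤) :
    lpNorm p x ^ p.toReal = ∑ i, |x i| ^ p.toReal := by
  rw [lpNorm_of_ne_top x hp, ← Real.rpow_mul (by positivity),
    one_div_mul_cancel (ENNReal.toReal_pos hp₀.ne' hp).ne', Real.rpow_one]

lemma lpNorm_le_of_sum_rpow_le (hp₀ : 0 < p) (hp : p ≠ ⊤) {c : ℝ} (hc : 0 ≤ c)
    (h : ∑ i, |x i| ^ p.toReal ≤ c ^ p.toReal) : lpNorm p x ≤ c := by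
  rw [← lpNorm_rpow_toReal x hp₀ hp] at h
  exact (Real.rpow_le_rpow_iff (lpNorm_nonneg x) hc (ENNReal.toReal_pos hp₀.ne' hp)).1 h

lemma abs_apply_le_lpNorm (hp₀ : 0 < p) (i : Fin d) : |x i| ≤ lpNorm p x := by
  obtain rfl | hp := eq_or_ne p ⊤
  · rw [lpNorm_top]
    exact le_ciSup (f := fun i ↦ |x i|) (Set.finite_range _).bddAbove i
  · rw [← Real.rpow_le_rpow_iff (abs_nonneg _) (lpNorm_nonneg x) (ENNReal.toReal_pos hp₀.ne' hp),
      lpNorm_rpow_toReal x hp₀ hp]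
    exact Finset.single_le_sum (f := fun i ↦ |x i| ^ p.toReal) (fun i _ ↦ by positivity)
      (Finset.mem_univ i)

lemma lpNorm_anti (hq₀ : 0 < q) (hqp : q ≤ p) : lpNorm p x ≤ lpNorm q x := by
  obtain rfl | hp := eq_or_ne p ⊤
  · rw [lpNorm_top]
    exact Real.iSup_le (abs_apply_le_lpNorm x hq₀) (lpNorm_nonneg x)
  have hq : q ≠ ⊤ := (hqp.trans_lt hp.lt_top).ne
  have hq₀' : 0 < q.toReal := ENNReal.toReal_pos hq₀.ne' hq
  have hqp' : q.toReal ≤ p.toReal := ENNReal.toReal_mono hp hqp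
  have hsplit {c : ℝ} (hc : 0 ≤ c) :
      c ^ p.toReal = c ^ q.toReal * c ^ (p.toReal - q.toReal) := by
    rw [← Real.rpow_add_of_nonneg hc hq₀'.le (by linarith), add_sub_cancel]
  refine lpNorm_le_of_sum_rpow_le x (hq₀.trans_le hqp) hp (lpNorm_nonneg x) ?_
  calc ∑ i, |x i| ^ p.toReal
      ≤ ∑ i, |x i| ^ q.toReal * lpNorm q x ^ (p.toReal - q.toReal) :=
        Finset.sum_le_sum fun i _ ↦ by
          rw [hsplit (abs_nonneg _)]
          gcongr
          exact abs_apply_le_lpNorm x hq₀ i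
    _ = lpNorm q x ^ p.toReal := by
        rw [← Finset.sum_mul, ← lpNorm_rpow_toReal x hq₀ hq, ← hsplit (lpNorm_nonneg x)]

lemma rinv_eq_toReal_inv (p : ℝ≥0∞) : rinv p = (p⁻¹).toReal := by
  obtain rfl | hp := eq_or_ne p ⊤
  · simp [rinv]
  · simp [rinv, hp]

lemma rinv_anti (hp₀ : 0 < p) (hpq : p ≤ q) : rinv q ≤ rinv p := by
  rw [rinv_eq_toReal_inv, rinv_eq_toReal_inv]
  exact ENNReal.toReal_mono (ENNReal.inv_ne_top.2 hp₀.ne') (ENNReal.inv_le_inv.2 hpq)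

lemma lpNorm_le_rpow_rinv_mul_lpNorm_top (hp₀ : 0 < p) :
    lpNorm p x ≤ (d : ℝ) ^ rinv p * lpNorm ⊤ x := by
  obtain rfl | hp := eq_or_ne p ⊤
  · simp [rinv]
  have hp₀' : 0 < p.toReal := ENNReal.toReal_pos hp₀.ne' hp
  refine lpNorm_le_of_sum_rpow_le x hp₀ hp (mul_nonneg (by positivity) (lpNorm_nonneg x)) ?_
  calc ∑ i, |x i| ^ p.toReal ≤ ∑ _i : Fin d, lpNorm ⊤ x ^ p.toReal := by
        gcongr with i
        exact abs_apply_le_lpNorm x ENNReal.zero_lt_top i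
    _ = ((d : ℝ) ^ rinv p * lpNorm ⊤ x) ^ p.toReal := by
        rw [Real.mul_rpow (by positivity) (lpNorm_nonneg x), ← Real.rpow_mul (by positivity)]
        simp [rinv, hp, hp₀'.ne']

lemma lpNorm_le_rpow_rinv_sub_mul_lpNorm (hp₀ : 0 < p) (hpq : p ≤ q) :
    lpNorm p x ≤ (d : ℝ) ^ (rinv p - rinv q) * lpNorm q x := by
  obtain rfl | hq := eq_or_ne q ⊤
  · simpa [rinv] using lpNorm_le_rpow_rinv_mul_lpNorm_top x hp₀
  have hp : p ≠ ⊤ := (hpq.trans_lt hq.lt_top).ne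
  have hp₀' : 0 < p.toReal := ENNReal.toReal_pos hp₀.ne' hp
  have hpq' : p.toReal ≤ q.toReal := ENNReal.toReal_mono hq hpq
  have hq₀' : 0 < q.toReal := hp₀'.trans_le hpq'
  have hjensen : (∑ i, |x i| ^ p.toReal) ^ (q.toReal / p.toReal) ≤
      (d : ℝ) ^ (q.toReal / p.toReal - 1) * ∑ i, |x i| ^ q.toReal := by
    have := Real.rpow_sum_le_const_mul_sum_rpow_of_nonneg (Finset.univ : Finset (Fin d))
      (f := fun i ↦ |x i| ^ p.toReal) ((one_le_div hp₀').2 hpq') fun i _ ↦ by positivity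
    simpa only [Finset.card_univ, Fintype.card_fin, ← Real.rpow_mul (abs_nonneg _),
      mul_div_cancel₀ _ hp₀'.ne'] using this
  calc lpNorm p x = ((∑ i, |x i| ^ p.toReal) ^ (q.toReal / p.toReal)) ^ (1 / q.toReal) := by
        rw [lpNorm_of_ne_top x hp, ← Real.rpow_mul (by positivity)]
        congr 1
        field_simp
    _ ≤ ((d : ℝ) ^ (q.toReal / p.toReal - 1) * ∑ i, |x i| ^ q.toReal) ^ (1 / q.toReal) := by
        gcongr
    _ = (d : ℝ) ^ (rinv p - rinv q) * lpNorm q x := by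
        rw [Real.mul_rpow (by positivity) (by positivity), ← Real.rpow_mul (by positivity),
          lpNorm_of_ne_top x hq]
        congr 2
        simp only [rinv, hp, hq, if_false]
        field_simp

lemma lpNorm_le_rpow_max_mul_lpNorm (hp₀ : 0 < p) (hq₀ : 0 < q) :
    lpNorm p x ≤ (d : ℝ) ^ max (rinv p - rinv q) 0 * lpNorm q x := by
  obtain hpq | hqp := le_total p q
  · rw [max_eq_left (sub_nonneg.2 (rinv_anti hp₀ hpq))]
    exact lpNorm_le_rpow_rinv_sub_mul_lpNorm x hp₀ hpq
  · rw [max_eq_right (sub_nonpos.2 (rinv_anti hq₀ hqp)), Real.rpow_zero, one_mul]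
    exact lpNorm_anti x hq₀ hqp

lemma lpNorm_ofLp_le (hp₀ : 0 < p) (x : EuclideanSpace ℝ (Fin d)) :
    lpNorm p x.ofLp ≤ (d : ℝ) ^ max (rinv p - 1 / 2) 0 * ‖x‖ := by
  simpa [rinv, lpNorm_two_ofLp] using lpNorm_le_rpow_max_mul_lpNorm x.ofLp hp₀ two_pos

end LpNorm

section Networks

open Module

lemma MLP.exists_factorsThrough_linearMap {m n : ℕ} (net : MLP m n) :
    ∃ (h : ℕ) (L : (Fin m → ℝ) →ₗ[ℝ] (Fin h → ℝ)),
      finrank ℝ (LinearMap.range L) ≤ max n net.width ∧ Function.FactorsThrough net.eval L := by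
  cases net with
  | last W b =>
    exact ⟨_, W.mulVecLin, W.rank_le_height.trans (le_max_left _ _),
      fun _ _ hxy ↦ congrArg (· + b) hxy⟩
  | cons W b rest =>
    exact ⟨_, W.mulVecLin, W.rank_le_height.trans ((le_max_left _ _).trans (le_max_right _ _)),
      fun _ _ hxy ↦ congrArg (fun y ↦ rest.eval fun i ↦ max ((y + b) i) 0) hxy⟩

lemma not_robustMem_of_periodic {N d : ℕ} {p : ℝ≥0∞} {σ : ℝ} {X : Fin N → Fin d → ℝ}
    {Y : Fin N → ℕ} {f : (Fin d → ℝ) → ℝ} {c : Fin d → ℝ} (hf : Function.Periodic f c)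
    {i j : Fin N} (hij : Y i ≠ Y j) (hclose : lpNorm p ((1 / 2 : ℝ) • (X i - X j - c)) ≤ σ) :
    ¬ RobustMem p σ X Y f := by
  intro hmem
  set w := (1 / 2 : ℝ) • (X i - X j - c) with hw
  have hshift : X i - w = X j + w + c := by
    rw [hw]
    module
  have hi : f (X i - w) = Y i := hmem i _ (by rwa [sub_sub_cancel_left, lpNorm_neg])
  have hj : f (X j + w) = Y j := hmem j _ (by rwa [add_sub_cancel_left])
  rw [hshift, hf, hj] at hi
  exact hij (mod_cast hi.symm)

end Networks

section Datasets

open Module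

lemma exists_separated_dataset_of_classes {E : Type*} [NormedAddCommGroup E] [NormedSpace ℝ E]
    {d N : ℕ} (ι : E →ₗᵢ[ℝ] EuclideanSpace ℝ (Fin d)) {A B : Finset E}
    (hcard : A.card + B.card ≤ N) {δ : ℝ} (hδ : IsLeast (Set.image2 dist (A : Set E) B) δ) :
    ∃ (X : Fin N → Fin d → ℝ) (Y : Fin N → ℕ), (∀ i, 1 ≤ Y i ∧ Y i ≤ 2) ∧ Separated 2 δ X Y ∧
      ∀ a ∈ A, ∀ b ∈ B, ∃ i j, Y i ≠ Y j ∧ X i = (ι a).ofLp ∧ X j = (ι b).ofLp := by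
  obtain ⟨⟨a₀, ha₀, b₀, hb₀, hab₀⟩, hmin⟩ := hδ
  obtain ⟨f, hf⟩ : ∃ f : Fin N → A ⊕ B, Function.Surjective f :=
    Function.exists_surjective_iff.2
      ⟨⟨fun _ ↦ .inl ⟨a₀, ha₀⟩⟩, Function.Embedding.nonempty_of_card_le (by simpa using hcard)⟩
  let point : A ⊕ B → E := Sum.elim Subtype.val Subtype.val
  let label : A ⊕ B → ℕ := Sum.elim 1 2
  have hlabel (u : A ⊕ B) : 1 ≤ label u ∧ label u ≤ 2 := by
    rcases u with a | b <;> simp [label]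
  have hsep (u v : A ⊕ B) (huv : label u ≠ label v) : δ ≤ dist (point u) (point v) := by
    rcases u with a | b <;> rcases v with a' | b'
    · exact absurd rfl huv
    · exact hmin ⟨a, a.2, b', b'.2, rfl⟩
    · exact hmin ⟨a', a'.2, b, b.2, dist_comm _ _⟩
    · exact absurd rfl huv
  have hdist (u v : A ⊕ B) :
      lpNorm 2 ((ι (point u)).ofLp - (ι (point v)).ofLp) = dist (point u) (point v) := by
    rw [← WithLp.ofLp_sub, lpNorm_two_ofLp, ← dist_eq_norm, ι.dist_map]
  refine ⟨fun i ↦ (ι (point (f i))).ofLp, fun i ↦ label (f i), fun i ↦ hlabel (f i),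
    ⟨fun i j hij ↦ (hsep _ _ hij).trans_eq (hdist _ _).symm, ?_⟩, fun a ha b hb ↦ ?_⟩
  · obtain ⟨i, hi⟩ := hf (.inl ⟨a₀, ha₀⟩)
    obtain ⟨j, hj⟩ := hf (.inr ⟨b₀, hb₀⟩)
    exact ⟨i, j, by simp [hi, hj, label], by rw [hdist, hi, hj]; exact hab₀⟩
  · obtain ⟨i, hi⟩ := hf (.inl ⟨a, ha⟩)
    obtain ⟨j, hj⟩ := hf (.inr ⟨b, hb⟩)
    exact ⟨i, j, by simp [hi, hj, label], by simp [hi, point], by simp [hj, point]⟩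

lemma exists_submodule_finrank_eq {K V : Type*} [DivisionRing K] [AddCommGroup V] [Module K V]
    {n : ℕ} (hn : n ≤ finrank K V) : ∃ U : Submodule K V, finrank K U = n := by
  obtain ⟨v, hv⟩ := exists_linearIndependent_of_le_finrank hn
  exact ⟨_, (finrank_span_eq_card hv).trans (Fintype.card_fin n)⟩

lemma exists_ne_zero_map_eq_zero {K E V F : Type*} [DivisionRing K] [AddCommGroup E] [Module K E]
    [FiniteDimensional K E] [AddCommGroup V] [Module K V] [FiniteDimensional K V]
    [AddCommGroup F] [Module K F] (ι : E →ₗ[K] V) (L : V →ₗ[K] F)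
    (h : finrank K (LinearMap.range L) < finrank K E) : ∃ v ≠ 0, L (ι v) = 0 := by
  have hker : LinearMap.ker (L.rangeRestrict ∘ₗ ι) ≠ ⊥ := LinearMap.ker_ne_bot_of_finrank_lt h
  obtain ⟨v, hv, hv₀⟩ := Submodule.exists_mem_ne_zero_of_ne_bot hker
  exact ⟨v, hv₀, congrArg Subtype.val (LinearMap.mem_ker.1 hv)⟩

lemma DifferencesNearLines.not_robustMem {E : Type*} [NormedAddCommGroup E] [NormedSpace ℝ E]
    [FiniteDimensional ℝ E] {A B : Set E} {ε : ℝ} (hlines : DifferencesNearLines ε A B) {d N : ℕ}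
    {ι : E →ₗᵢ[ℝ] EuclideanSpace ℝ (Fin d)} {X : Fin N → Fin d → ℝ} {Y : Fin N → ℕ}
    (hpair : ∀ a ∈ A, ∀ b ∈ B, ∃ i j, Y i ≠ Y j ∧ X i = (ι a).ofLp ∧ X j = (ι b).ofLp)
    {p : ℝ≥0∞} (hp : 0 < p) {σ : ℝ} (hσ : (d : ℝ) ^ max (rinv p - 1 / 2) 0 * (1 / 2 * ε) ≤ σ)
    {F : Type*} [AddCommGroup F] [Module ℝ F] {L : (Fin d → ℝ) →ₗ[ℝ] F}
    (hL : finrank ℝ (LinearMap.range L) < finrank ℝ E) {f : (Fin d → ℝ) → ℝ}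
    (hf : Function.FactorsThrough f L) : ¬ RobustMem p σ X Y f := by
  obtain ⟨v, hv₀, hLv⟩ := exists_ne_zero_map_eq_zero
    ((WithLp.linearEquiv 2 ℝ (Fin d → ℝ)).toLinearMap ∘ₗ ι.toLinearMap) L hL
  obtain ⟨a, ha, b, hb, t, ht⟩ := hlines v hv₀
  obtain ⟨i, j, hij, hi, hj⟩ := hpair a ha b hb
  have hperiodic : Function.Periodic f (ι (t • v)).ofLp := fun x ↦ hf <| by
    simpa using Or.inr hLv
  refine not_robustMem_of_periodic hperiodic hij.symm ?_
  calc lpNorm p ((1 / 2 : ℝ) • (X j - X i - (ι (t • v)).ofLp))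
      = lpNorm p (ι ((1 / 2 : ℝ) • (b - a - t • v))).ofLp := by simp [hi, hj]
    _ ≤ (d : ℝ) ^ max (rinv p - 1 / 2) 0 * ‖(1 / 2 : ℝ) • (b - a - t • v)‖ := by
        rw [← ι.norm_map]
        exact lpNorm_ofLp_le hp _
    _ ≤ (d : ℝ) ^ max (rinv p - 1 / 2) 0 * (1 / 2 * ε) := by
        rw [norm_smul, Real.norm_of_nonneg one_half_pos.le]
        gcongr
    _ ≤ σ := hσ

end Datasets

theorem robust_memorization_lower_bound_general
    (N d k : ℕ) (p : ℝ≥0∞) (σ δ : ℝ)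
    (hN : 2 ≤ N) (hk : 1 ≤ k) (hkd : k < d) (hp : 0 < p) (hδ : 0 < δ)
    (hratio : σ / δ > 2416 * (d : ℝ) ^ max (rinv p - 1 / 2) 0 *
      (N : ℝ) ^ (-(2 : ℝ) / (k : ℝ))) :
    ∃ (X : Fin N → Fin d → ℝ) (Y : Fin N → ℕ),
      (∀ i, 1 ≤ Y i ∧ Y i ≤ 2) ∧ Separated 2 δ X Y ∧
      ∀ {F : Type*} [AddCommGroup F] [Module ℝ F] (L : (Fin d → ℝ) →ₗ[ℝ] F)
        (f : (Fin d → ℝ) → ℝ), Module.finrank ℝ (LinearMap.range L) ≤ k →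
        Function.FactorsThrough f L → ¬ RobustMem p σ X Y f := by
  obtain ⟨U, hU⟩ := exists_submodule_finrank_eq (K := ℝ) (V := EuclideanSpace ℝ (Fin d))
    (n := k + 1) (by simpa using hkd)
  obtain ⟨A, B, hcard, hleast, hlines⟩ := exists_classes_differencesNearLines hk hU hN hδ
  obtain ⟨X, Y, hlabel, hsep, hpair⟩ :=
    exists_separated_dataset_of_classes U.subtypeₗᵢ hcard hleast
  have hσ : (d : ℝ) ^ max (rinv p - 1 / 2) 0 *
      (1 / 2 * (4832 * (N : ℝ) ^ (-(2 : ℝ) / k) * δ)) ≤ σ := by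
    linarith [(lt_div_iff₀ hδ).1 hratio]
  exact ⟨X, Y, hlabel, hsep, fun L f hL hf ↦ hlines.not_robustMem hpair hp hσ (by omega) hf⟩

/-- **Lower bound for robust memorization with small width** (`1 ≤ k ≤ d - 1`). -/
theorem robust_memorization_lower_bound
    (N d k : ℕ) (p : ℝ≥0∞) (σ δ : ℝ)
    (hN : 2 ≤ N) (hd : 2 ≤ d) (hk1 : 1 ≤ k) (hkd : k ≤ d - 1)
    (hp : 0 < p) (hσ : 0 < σ) (hδ : 0 < δ)
    (hratio : σ / δ > 2416 * (d : ℝ) ^ max (rinv p - 1 / 2) 0 *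
      (N : ℝ) ^ (-(2 : ℝ) / (k : ℝ))) :
    ∃ (X : Fin N → Fin d → ℝ) (Y : Fin N → ℕ),
      (∀ i, 1 ≤ Y i ∧ Y i ≤ 2) ∧ Separated 2 δ X Y ∧
      ∀ net : MLP d 1, net.width = k → ¬ RobustMem p σ X Y (fun x => net.eval x 0) := by
  obtain ⟨X, Y, hlabel, hsep, hnot⟩ := robust_memorization_lower_bound_general
    N d k p σ δ hN hk1 (by omega) hp hδ hratio
  refine ⟨X, Y, hlabel, hsep, fun net hwidth ↦ ?_⟩
  obtain ⟨h, L, hrank, hL⟩ := net.exists_factorsThrough_linearMap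
  exact hnot L _ (by omega) fun x y hxy ↦ congrFun (hL hxy) 0

end
end
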